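/- arXiv:2212.05433 — 14 statements merged into one kernel-verified Lean document; each statement's English description precedes it below -/
import Mathlib

section
/- Let N ⊊ M be nodes. If N is a singleton, assume additionally that every vertex is compatible with M. Then inner(N) ⊆ inner(M). -/
open Set

variable {Λ W ι : Type*}

/-- The clique of a leaf: vertices whose `Cl`-set contains the leaf. -/
def leafC (Cl : W → Set Λ) (ℓ : Λ) : Set W := {v | ℓ ∈ Cl v}

/-- `V(N)`: vertices with `Cl(v) ⊆ N`. -/
def Vset (Cl : W → Set Λ) (N : Set Λ) : Set W := {v | Cl v ⊆ N}

/-- `U(N)`: vertices with `Cl(v) = N`. -/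
def Uset (Cl : W → Set Λ) (N : Set Λ) : Set W := {v | Cl v = N}

/-- `I(N)`: vertices with `Cl(v) ⊊ N`. -/
def Iset (Cl : W → Set Λ) (N : Set Λ) : Set W := {v | Cl v ⊂ N}

/-- `E(N)`: vertices with `N ⊊ Cl(v)`. -/
def Eset (Cl : W → Set Λ) (N : Set Λ) : Set W := {v | N ⊂ Cl v}

/-- A vertex is compatible with a node `N`. -/
def Compatible (Cl : W → Set Λ) (v : W) (N : Set Λ) : Prop :=
  Cl v ⊆ N ∨ N ⊆ Cl v ∨ Cl v ∩ N = ∅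

/-- `inner(N)`: for a singleton node `{ℓ}` the components with `C(I) = C(ℓ)`;
for a non-singleton node the components with `C(I) ∩ I(N) ≠ ∅` and
`U(N) ∪ E(N) ⊊ C(I)`. -/
def innerSet (Cl : W → Set Λ) (CI : ι → Set W) (N : Set Λ) : Set ι :=
  {I | (∃ ℓ, N = {ℓ} ∧ CI I = leafC Cl ℓ) ∨
       ((¬ ∃ ℓ, N = {ℓ}) ∧ (CI I ∩ Iset Cl N).Nonempty ∧
        Uset Cl N ∪ Eset Cl N ⊂ CI I)}

/-- `middle_M(N) = {I ∈ inner(M) \ inner(N) : C(I) ∩ V(N) ≠ ∅}`. -/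
def middleSet (Cl : W → Set Λ) (CI : ι → Set W) (M N : Set Λ) : Set ι :=
  {I | I ∈ innerSet Cl CI M ∧ I ∉ innerSet Cl CI N ∧ (CI I ∩ Vset Cl N).Nonempty}

theorem stmt0 [Fintype Λ] [Fintype W] [Fintype ι]
    (Cl : W → Set Λ) (CI : ι → Set W)
    (hCl : ∀ v, (Cl v).Nonempty)
    (hleaf : ∀ ℓ ℓ' : Λ, ℓ ≠ ℓ' → ¬ leafC Cl ℓ ⊆ leafC Cl ℓ')
    (hCI : ∀ I, (CI I).Nonempty)
    (hHelly : ∀ I, (⋂ v ∈ CI I, Cl v).Nonempty)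
    (N M : Set Λ) (hNne : N.Nonempty) (hMne : M.Nonempty)
    (hNM : N ⊂ M)
    (hcompat : (∃ ℓ, N = {ℓ}) → ∀ v, Compatible Cl v M) :
    innerSet Cl CI N ⊆ innerSet Cl CI M := by
  have hMs : ¬ ∃ ℓ, M = {ℓ} := by
    rintro ⟨m, rfl⟩
    obtain ⟨n, hn⟩ := hNne
    apply hNM.2
    rintro x rfl
    have := hNM.1 hn
    rw [Set.mem_singleton_iff] at this
    exact this ▸ hn
  have key : ∀ I v, v ∈ CI I → Cl v ⊂ M → (∀ w, M ⊆ Cl w → w ∈ CI I) →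
      I ∈ innerSet Cl CI M := by
    intro I v hv hvM hw
    refine Or.inr ⟨hMs, ⟨v, hv, hvM⟩, ?_, ?_⟩
    · rintro w (h | h)
      · exact hw w (le_of_eq (Eq.symm h))
      · exact hw w (HasSSubset.SSubset.subset h)
    · intro h
      rcases h hv with h | h
      · exact hvM.2 (le_of_eq (Eq.symm h))
      · exact hvM.2 (HasSSubset.SSubset.subset h)
  rintro I (⟨l, hl, hI⟩ | ⟨hNs, ⟨v, hv, hvN⟩, hs⟩)
  · have hlM : l ∈ M := hNM.1 (by rw [hl]; rfl)
    obtain ⟨m, hm, hmN⟩ := Set.exists_of_ssubset hNM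
    have hne : l ≠ m := by
      rintro rfl
      exact hmN (by rw [hl]; rfl)
    obtain ⟨v, hv, hvm⟩ := Set.not_subset.1 (hleaf l m hne)
    refine key I v (hI ▸ hv) ?_ ?_
    · have hn : ¬ M ⊆ Cl v := fun h => hvm (h hm)
      rcases hcompat ⟨l, hl⟩ v with h | h | h
      · exact ⟨h, hn⟩
      · exact absurd h hn
      · have : l ∈ Cl v ∩ M := ⟨hv, hlM⟩
        rw [h] at this
        exact this.elim
    · intro w hw
      rw [hI]
      exact hw hlM
  · refine key I v hv (HasSSubset.SSubset.trans hvN hNM) ?_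
    intro w hw
    exact hs.1 (Or.inr (HasSSubset.SSubset.trans_subset hNM hw))
end

section
/- Let N and M be disjoint nodes. Then inner(N) ∩ inner(M) = ∅. -/
open Set

variable {Λ W ι : Type*}

theorem stmt1 [Fintype Λ] [Fintype W] [Fintype ι]
    (Cl : W → Set Λ) (CI : ι → Set W)
    (hCl : ∀ v, (Cl v).Nonempty)
    (hleaf : ∀ ℓ ℓ' : Λ, ℓ ≠ ℓ' → ¬ leafC Cl ℓ ⊆ leafC Cl ℓ')
    (hCI : ∀ I, (CI I).Nonempty)
    (hHelly : ∀ I, (⋂ v ∈ CI I, Cl v).Nonempty)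
    (N M : Set Λ) (hNne : N.Nonempty) (hMne : M.Nonempty)
    (hdisj : N ∩ M = ∅) :
    innerSet Cl CI N ∩ innerSet Cl CI M = ∅ := by
  have key : ∀ (K : Set Λ) (I : ι) (p : Λ), (∀ v ∈ CI I, p ∈ Cl v) →
      I ∈ innerSet Cl CI K → p ∈ K := by
    intro K I p hp hI
    rcases hI with ⟨l, rfl, hl⟩ | ⟨_, ⟨v, hv, hvK⟩, _⟩
    · by_contra hne
      refine hleaf l p (fun h => hne h.symm) ?_
      intro v hv
      exact hp v (hl ▸ hv)
    · exact hvK.1 (hp v hv)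
  rw [Set.eq_empty_iff_forall_notMem]
  rintro I ⟨hN, hM⟩
  obtain ⟨p, hp⟩ := hHelly I
  have hp2 : ∀ v ∈ CI I, p ∈ Cl v := by simpa using hp
  have hmem : p ∈ N ∩ M := ⟨key N I p hp2 hN, key M I p hp2 hM⟩
  rw [hdisj] at hmem
  exact hmem
end

section
/- Let M be a node and let N_1, N_2 ⊊ M be disjoint nodes. Then (middle_M(N_1) ∪ inner(N_1)) ∩ (middle_M(N_2) ∪ inner(N_2)) = ∅. -/
open Set

variable {Λ W ι : Type*}

theorem stmt2 [Fintype Λ] [Fintype W] [Fintype ι]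
    (Cl : W → Set Λ) (CI : ι → Set W)
    (hCl : ∀ v, (Cl v).Nonempty)
    (hleaf : ∀ ℓ ℓ' : Λ, ℓ ≠ ℓ' → ¬ leafC Cl ℓ ⊆ leafC Cl ℓ')
    (hCI : ∀ I, (CI I).Nonempty)
    (hHelly : ∀ I, (⋂ v ∈ CI I, Cl v).Nonempty)
    (M N₁ N₂ : Set Λ) (hMne : M.Nonempty)
    (hN₁ne : N₁.Nonempty) (hN₂ne : N₂.Nonempty)
    (hN₁M : N₁ ⊂ M) (hN₂M : N₂ ⊂ M)
    (hdisj : N₁ ∩ N₂ = ∅) :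
    (middleSet Cl CI M N₁ ∪ innerSet Cl CI N₁) ∩
      (middleSet Cl CI M N₂ ∪ innerSet Cl CI N₂) = ∅ := by
  have key : ∀ (I : ι) (p : Λ), (∀ v ∈ CI I, p ∈ Cl v) → ∀ N : Set Λ,
      I ∈ middleSet Cl CI M N ∪ innerSet Cl CI N → p ∈ N := by
    intro I p hp N h
    rcases h with ⟨_, _, v, hv, hvN⟩ | ⟨ℓ, hN, hC⟩ | ⟨_, ⟨v, hv, hvN⟩, _⟩
    · exact hvN (hp v hv)
    · by_cases hℓ : ℓ = p
      · rw [hN, hℓ]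
        exact Set.mem_singleton p
      · refine absurd ?_ (hleaf ℓ p hℓ)
        intro v hv
        exact hp v (hC ▸ hv)
    · exact hvN.1 (hp v hv)
  rw [Set.eq_empty_iff_forall_notMem]
  rintro I ⟨h₁, h₂⟩
  obtain ⟨p, hp⟩ := hHelly I
  have hp' : ∀ v ∈ CI I, p ∈ Cl v := by simpa using hp
  have hmem : p ∈ N₁ ∩ N₂ := ⟨key I p hp' N₁ h₁, key I p hp' N₂ h₂⟩
  rw [hdisj] at hmem
  exact hmem
end

section
/- Let N ⊊ M be nodes, let I ∈ inner(N) and J ∈ middle_M(N). Then C(I) is not a subset of C(J). (Hence, in any order that refines inclusion of the sets C(·), if I and J are comparable then J lies below I.) -/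
open Set

variable {Λ W ι : Type*}

theorem stmt3 [Fintype Λ] [Fintype W] [Fintype ι]
    (Cl : W → Set Λ) (CI : ι → Set W)
    (hCl : ∀ v, (Cl v).Nonempty)
    (hleaf : ∀ ℓ ℓ' : Λ, ℓ ≠ ℓ' → ¬ leafC Cl ℓ ⊆ leafC Cl ℓ')
    (hCI : ∀ I, (CI I).Nonempty)
    (hHelly : ∀ I, (⋂ v ∈ CI I, Cl v).Nonempty)
    (N M : Set Λ) (hNne : N.Nonempty) (hMne : M.Nonempty)
    (hNM : N ⊂ M)
    (I J : ι) (hI : I ∈ innerSet Cl CI N) (hJ : J ∈ middleSet Cl CI M N) :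
    ¬ CI I ⊆ CI J := by
  intro h
  obtain ⟨-, hJN, -⟩ := hJ
  apply hJN
  rcases hI with ⟨l, hN, hl⟩ | ⟨hs, ⟨v, hv, hvN⟩, hU⟩
  · left
    refine ⟨l, hN, ?_⟩
    obtain ⟨p, hp⟩ := hHelly J
    have hJp : CI J ⊆ leafC Cl p := fun v hv => Set.mem_iInter₂.mp hp v hv
    rw [hl] at h
    have hlp : l = p := by
      by_contra hne
      exact hleaf l p hne (h.trans hJp)
    subst hlp
    exact Set.Subset.antisymm hJp h
  · right
    exact ⟨hs, ⟨v, h hv, hvN⟩, lt_of_lt_of_le hU h⟩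
end

section
/- Let N ⊊ M be nodes with V(N) ≠ ∅; if N is a singleton, assume additionally that every vertex is compatible with M. Then middle_M(N) ∪ inner(N) = {I ∈ inner(M) : C(I) ∩ V(N) ≠ ∅}. -/
open Set

variable {Λ W ι : Type*}

theorem stmt4 [Fintype Λ] [Fintype W] [Fintype ι]
    (Cl : W → Set Λ) (CI : ι → Set W)
    (hCl : ∀ v, (Cl v).Nonempty)
    (hleaf : ∀ ℓ ℓ' : Λ, ℓ ≠ ℓ' → ¬ leafC Cl ℓ ⊆ leafC Cl ℓ')
    (hCI : ∀ I, (CI I).Nonempty)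
    (hHelly : ∀ I, (⋂ v ∈ CI I, Cl v).Nonempty)
    (N M : Set Λ) (hNne : N.Nonempty) (hMne : M.Nonempty)
    (hNM : N ⊂ M)
    (hV : (Vset Cl N).Nonempty)
    (hcompat : (∃ ℓ, N = {ℓ}) → ∀ v, Compatible Cl v M) :
    middleSet Cl CI M N ∪ innerSet Cl CI N
      = {I | I ∈ innerSet Cl CI M ∧ (CI I ∩ Vset Cl N).Nonempty} := by
  have hMs : ¬ ∃ ℓ, M = {ℓ} := by
    rintro ⟨m, rfl⟩
    exact hNne.ne_empty (Set.ssubset_singleton_iff.mp hNM)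
  -- a vertex of `C(I)` strictly inside `M` plus the cover condition gives membership in `inner(M)`
  have key : ∀ I w, w ∈ CI I → Cl w ⊆ N → (∀ v, M ⊆ Cl v → v ∈ CI I) →
      I ∈ innerSet Cl CI M ∧ (CI I ∩ Vset Cl N).Nonempty := by
    intro I w hw hwN hcov
    have hwM : Cl w ⊂ M := lt_of_le_of_lt hwN hNM
    refine ⟨Or.inr ⟨hMs, ⟨w, hw, hwM⟩, ?_, ?_⟩, ⟨w, hw, hwN⟩⟩
    · rintro v (hv | hv)
      · exact hcov v (le_of_eq (Eq.symm hv))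
      · exact hcov v hv.1
    · intro h
      rcases h hw with hv | hv
      · exact hwM.2 (le_of_eq (Eq.symm hv))
      · exact hwM.2 hv.1
  ext I
  constructor
  · rintro (⟨h1, _, h3⟩ | (⟨l, hN, hC⟩ | ⟨_, ⟨w, hw, hwN⟩, hs⟩))
    · exact ⟨h1, h3⟩
    · obtain ⟨w, hw⟩ := hV
      have hlN : l ∈ N := by rw [hN]; rfl
      refine key I w ?_ hw ?_
      · rw [hC]
        obtain ⟨x, hx⟩ := hCl w
        have hxl : x ∈ N := hw hx
        rw [hN] at hxl
        have e : x = l := hxl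
        exact e ▸ hx
      · intro v hv
        rw [hC]
        exact hv (hNM.1 hlN)
    · exact key I w hw hwN.1 fun v hv => hs.1 (Or.inr (lt_of_lt_of_le hNM hv))
  · rintro ⟨h1, h2⟩
    by_cases h : I ∈ innerSet Cl CI N
    · exact Or.inr h
    · exact Or.inl ⟨h1, h, h2⟩
end

section
/- (P-node partition.) Let M be a node partitioned into nodes N_1, …, N_k with k ≥ 2. Assume every vertex is compatible with M, and assume (the P-node property) that every vertex v with Cl(v) ⊊ M satisfies Cl(v) ⊆ N_i for some i ∈ [k]. Then the sets middle_M(N_1) ∪ inner(N_1), …, middle_M(N_k) ∪ inner(N_k) are pairwise disjoint subsets of inner(M), and every I ∈ inner(M) belongs to exactly one of them. -/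
open Set

variable {Λ W ι : Type*}

theorem stmt5 [Fintype Λ] [Fintype W] [Fintype ι]
    (Cl : W → Set Λ) (CI : ι → Set W)
    (hCl : ∀ v, (Cl v).Nonempty)
    (hleaf : ∀ ℓ ℓ' : Λ, ℓ ≠ ℓ' → ¬ leafC Cl ℓ ⊆ leafC Cl ℓ')
    (hCI : ∀ I, (CI I).Nonempty)
    (hHelly : ∀ I, (⋂ v ∈ CI I, Cl v).Nonempty)
    (M : Set Λ) (hMne : M.Nonempty)
    (k : ℕ) (hk : 2 ≤ k)
    (N : ℕ → Set Λ)
    (hNne : ∀ i ∈ Set.Icc 1 k, (N i).Nonempty)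
    (hNdisj : ∀ i ∈ Set.Icc 1 k, ∀ j ∈ Set.Icc 1 k, i ≠ j → N i ∩ N j = ∅)
    (hNunion : (⋃ i ∈ Set.Icc 1 k, N i) = M)
    (hcompat : ∀ v, Compatible Cl v M)
    (hP : ∀ v, Cl v ⊂ M → ∃ i ∈ Set.Icc 1 k, Cl v ⊆ N i) :
    (∀ i ∈ Set.Icc 1 k,
        middleSet Cl CI M (N i) ∪ innerSet Cl CI (N i) ⊆ innerSet Cl CI M) ∧
    (∀ i ∈ Set.Icc 1 k, ∀ j ∈ Set.Icc 1 k, i ≠ j →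
        (middleSet Cl CI M (N i) ∪ innerSet Cl CI (N i)) ∩
          (middleSet Cl CI M (N j) ∪ innerSet Cl CI (N j)) = ∅) ∧
    (∀ I ∈ innerSet Cl CI M,
        ∃! i, i ∈ Set.Icc 1 k ∧
          I ∈ middleSet Cl CI M (N i) ∪ innerSet Cl CI (N i)) := by
  have hsub : ∀ i ∈ Set.Icc 1 k, N i ⊆ M := by
    intro i hi x hx
    rw [← hNunion]
    exact Set.mem_biUnion hi hx
  have hother : ∀ i ∈ Set.Icc 1 k, ∃ x ∈ M, x ∉ N i := by
    intro i hi
    obtain ⟨j, hj, hij⟩ : ∃ j ∈ Set.Icc 1 k, i ≠ j := by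
      by_cases h : i = 1
      · exact ⟨2, ⟨by omega, hk⟩, by omega⟩
      · exact ⟨1, ⟨le_refl _, by omega⟩, h⟩
    obtain ⟨x, hx⟩ := hNne j hj
    refine ⟨x, hsub j hj hx, fun hx' => ?_⟩
    have : x ∈ N i ∩ N j := ⟨hx', hx⟩
    rw [hNdisj i hi j hj hij] at this
    exact this
  have h1k : (1 : ℕ) ∈ Set.Icc 1 k := ⟨le_refl _, by omega⟩
  have hMs : ¬ ∃ ℓ, M = {ℓ} := by
    rintro ⟨ℓ, rfl⟩
    obtain ⟨x, hx, hx'⟩ := hother 1 h1k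
    obtain ⟨y, hy⟩ := hNne 1 h1k
    have hyM := hsub 1 h1k hy
    rw [Set.mem_singleton_iff] at hx hyM
    subst hx
    subst hyM
    exact hx' hy
  have build : ∀ I v, v ∈ CI I → Cl v ⊂ M → (∀ w, M ⊆ Cl w → w ∈ CI I) →
      I ∈ innerSet Cl CI M := by
    intro I v hv hvM hall
    refine Or.inr ⟨hMs, ⟨v, hv, hvM⟩, ?_, ?_⟩
    · rintro w (hw | hw)
      · exact hall w (le_of_eq (Eq.symm hw))
      · exact hall w hw.1
    · intro h
      rcases h hv with hw | hw
      · exact hvM.2 (le_of_eq (Eq.symm hw))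
      · exact hvM.2 hw.1
  have key : ∀ i ∈ Set.Icc 1 k, ∀ I ∈ innerSet Cl CI (N i),
      I ∈ innerSet Cl CI M ∧ (CI I ∩ Vset Cl (N i)).Nonempty := by
    intro i hi I hI
    obtain ⟨x, hxM, hxN⟩ := hother i hi
    rcases hI with ⟨ℓ, hNl, hC⟩ | ⟨_, ⟨v, hv, hvN⟩, hUE⟩
    · have hlN : ℓ ∈ N i := by rw [hNl]; rfl
      have hne : ℓ ≠ x := fun h => hxN (h ▸ hlN)
      obtain ⟨v, hv, hvx⟩ := Set.not_subset.mp (hleaf ℓ x hne)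
      have hv' : ℓ ∈ Cl v := hv
      have hvx' : x ∉ Cl v := hvx
      have hvM : Cl v ⊂ M := by
        rcases hcompat v with h | h | h
        · exact ⟨h, fun h' => hvx' (h' hxM)⟩
        · exact absurd (h hxM) hvx'
        · have : ℓ ∈ Cl v ∩ M := ⟨hv', hsub i hi hlN⟩
          rw [h] at this
          exact this.elim
      have hvC : v ∈ CI I := by rw [hC]; exact hv
      refine ⟨build I v hvC hvM ?_, v, hvC, ?_⟩
      · intro w hw
        rw [hC]
        exact hw (hsub i hi hlN)
      · obtain ⟨j, hj, hvj⟩ := hP v hvM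
        by_cases hij : i = j
        · subst hij
          exact hvj
        · have : ℓ ∈ N i ∩ N j := ⟨hlN, hvj hv'⟩
          rw [hNdisj i hi j hj hij] at this
          exact this.elim
    · refine ⟨build I v hv ⟨hvN.1.trans (hsub i hi), fun h => hxN (hvN.1 (h hxM))⟩ ?_,
        v, hv, hvN.1⟩
      intro w hw
      exact hUE.1 (Or.inr ⟨(hsub i hi).trans hw, fun h => hxN (h (hw hxM))⟩)
  have key2 : ∀ i ∈ Set.Icc 1 k, ∀ I ∈ middleSet Cl CI M (N i) ∪ innerSet Cl CI (N i),
      I ∈ innerSet Cl CI M ∧ (CI I ∩ Vset Cl (N i)).Nonempty := by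
    rintro i hi I (h | h)
    · exact ⟨h.1, h.2.2⟩
    · exact key i hi I h
  have uniq : ∀ i ∈ Set.Icc 1 k, ∀ j ∈ Set.Icc 1 k, ∀ I,
      I ∈ middleSet Cl CI M (N i) ∪ innerSet Cl CI (N i) →
      I ∈ middleSet Cl CI M (N j) ∪ innerSet Cl CI (N j) → i = j := by
    intro i hi j hj I h1 h2
    by_contra hij
    obtain ⟨v, hv, hvi⟩ := (key2 i hi I h1).2
    obtain ⟨w, hw, hwj⟩ := (key2 j hj I h2).2
    obtain ⟨x, hx⟩ := hHelly I
    rw [Set.mem_iInter₂] at hx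
    have : x ∈ N i ∩ N j := ⟨hvi (hx v hv), hwj (hx w hw)⟩
    rw [hNdisj i hi j hj hij] at this
    exact this
  refine ⟨fun i hi I hI => (key2 i hi I hI).1, ?_, ?_⟩
  · intro i hi j hj hij
    exact Set.eq_empty_of_forall_notMem fun I hI => hij (uniq i hi j hj I hI.1 hI.2)
  · intro I hI
    have hex : ∃ v ∈ CI I, Cl v ⊂ M := by
      rcases hI with ⟨ℓ, h, _⟩ | ⟨_, ⟨v, hv, hvM⟩, _⟩
      · exact absurd ⟨ℓ, h⟩ hMs
      · exact ⟨v, hv, hvM⟩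
    obtain ⟨v, hv, hvM⟩ := hex
    obtain ⟨i, hi, hvi⟩ := hP v hvM
    have hmem : I ∈ middleSet Cl CI M (N i) ∪ innerSet Cl CI (N i) := by
      by_cases h : I ∈ innerSet Cl CI (N i)
      · exact Or.inr h
      · exact Or.inl ⟨hI, h, v, hv, hvi⟩
    exact ⟨i, ⟨hi, hmem⟩, fun j hj => uniq j hj.1 i hi I hj.2 hmem⟩
end

section
/- (P-node cross-incomparability.) Let M be a node partitioned into nodes N_1, …, N_k with k ≥ 2. Assume every vertex is compatible with M, that every vertex v with Cl(v) ⊊ M satisfies Cl(v) ⊆ N_i for some i ∈ [k], and that V(N_i) ≠ ∅ for every i. Then for all i ≠ j, all I ∈ middle_M(N_i) ∪ inner(N_i) and all J ∈ middle_M(N_j) ∪ inner(N_j), C(I) is not a subset of C(J). (Consequently, any chain with respect to an order refining inclusion of the sets C(·) meets at most one of these k sets.) -/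
open Set

variable {Λ W ι : Type*}

theorem stmt6 [Fintype Λ] [Fintype W] [Fintype ι]
    (Cl : W → Set Λ) (CI : ι → Set W)
    (hCl : ∀ v, (Cl v).Nonempty)
    (hleaf : ∀ ℓ ℓ' : Λ, ℓ ≠ ℓ' → ¬ leafC Cl ℓ ⊆ leafC Cl ℓ')
    (hCI : ∀ I, (CI I).Nonempty)
    (hHelly : ∀ I, (⋂ v ∈ CI I, Cl v).Nonempty)
    (M : Set Λ) (hMne : M.Nonempty)
    (k : ℕ) (hk : 2 ≤ k)
    (N : ℕ → Set Λ)
    (hNne : ∀ i ∈ Set.Icc 1 k, (N i).Nonempty)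
    (hNdisj : ∀ i ∈ Set.Icc 1 k, ∀ j ∈ Set.Icc 1 k, i ≠ j → N i ∩ N j = ∅)
    (hNunion : (⋃ i ∈ Set.Icc 1 k, N i) = M)
    (hcompat : ∀ v, Compatible Cl v M)
    (hP : ∀ v, Cl v ⊂ M → ∃ i ∈ Set.Icc 1 k, Cl v ⊆ N i)
    (hVne : ∀ i ∈ Set.Icc 1 k, (Vset Cl (N i)).Nonempty) :
    ∀ i ∈ Set.Icc 1 k, ∀ j ∈ Set.Icc 1 k, i ≠ j →
      ∀ I ∈ middleSet Cl CI M (N i) ∪ innerSet Cl CI (N i),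
        ∀ J ∈ middleSet Cl CI M (N j) ∪ innerSet Cl CI (N j),
          ¬ CI I ⊆ CI J := by
  have key : ∀ i ∈ Set.Icc 1 k, ∀ I ∈ middleSet Cl CI M (N i) ∪ innerSet Cl CI (N i),
      ∃ v ∈ CI I, Cl v ⊆ N i := by
    rintro i hi I (⟨_, _, v, hv, hv'⟩ | ⟨ℓ, hN, hC⟩ | ⟨_, ⟨v, hv, hv'⟩, _⟩)
    · exact ⟨v, hv, hv'⟩
    · obtain ⟨v, hv⟩ := hVne i hi
      have hv' : Cl v ⊆ N i := hv
      refine ⟨v, ?_, hv'⟩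
      obtain ⟨x, hx⟩ := hCl v
      have hxl : x = ℓ := by simpa [hN] using hv' hx
      rw [hC]
      exact hxl ▸ hx
    · exact ⟨v, hv, hv'.1⟩
  intro i hi j hj hij I hI J hJ hsub
  obtain ⟨v, hv, hvN⟩ := key i hi I hI
  obtain ⟨w, hw, hwN⟩ := key j hj J hJ
  obtain ⟨x, hx⟩ := hHelly J
  have hx' : ∀ u ∈ CI J, x ∈ Cl u := by simpa using hx
  have hmem : x ∈ N i ∩ N j := ⟨hvN (hx' v (hsub hv)), hwN (hx' w hw)⟩
  rw [hNdisj i hi j hj hij] at hmem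
  exact hmem
end

section
/- Let Q ⊆ Λ be a node partitioned into nonempty nodes N_1, …, N_k with k ≥ 3; assume every vertex is compatible with each N_i, and assume there is a linear order on Λ in which every set Cl(v) (v ∈ W) is an interval, every N_i is an interval, and all elements of N_i precede all elements of N_{i+1} for each i < k. Then for every vertex v ∈ I(Q) ∖ ⋃_i V(N_i): (i) for each i ∈ [k], either N_i ⊆ Cl(v) or N_i ∩ Cl(v) = ∅; and (ii) J(v) := {i ∈ [k] : N_i ⊆ Cl(v)} is a nonempty subinterval of [k] with J(v) ≠ [k]. -/
open Set

variable {Λ W ι : Type*}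

theorem stmt7 [Fintype Λ] [Fintype W]
    (Cl : W → Set Λ)
    (hCl : ∀ v, (Cl v).Nonempty)
    (Q : Set Λ) (hQne : Q.Nonempty)
    (k : ℕ) (hk : 3 ≤ k)
    (N : ℕ → Set Λ)
    (hNne : ∀ i ∈ Set.Icc 1 k, (N i).Nonempty)
    (hNdisj : ∀ i ∈ Set.Icc 1 k, ∀ j ∈ Set.Icc 1 k, i ≠ j → N i ∩ N j = ∅)
    (hNunion : (⋃ i ∈ Set.Icc 1 k, N i) = Q)
    (hcompatN : ∀ v, ∀ i ∈ Set.Icc 1 k, Compatible Cl v (N i))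
    -- a linear order on Λ …
    (le : Λ → Λ → Prop) (hlin : IsLinearOrder Λ le)
    -- … in which every set Cl(v) is an interval,
    (hClconv : ∀ v, ∀ a b c : Λ, le a b → le b c → a ∈ Cl v → c ∈ Cl v → b ∈ Cl v)
    -- every N_i is an interval,
    (hNconv : ∀ i ∈ Set.Icc 1 k, ∀ a b c : Λ,
        le a b → le b c → a ∈ N i → c ∈ N i → b ∈ N i)
    -- and all elements of N_i strictly precede all elements of N_{i+1}:
    (hNorder : ∀ i, 1 ≤ i → i < k → ∀ a ∈ N i, ∀ b ∈ N (i + 1), le a b ∧ a ≠ b)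
    (v : W) (hv : v ∈ Iset Cl Q \ ⋃ i ∈ Set.Icc 1 k, Vset Cl (N i)) :
    -- (i) each N_i is inside Cl(v) or disjoint from it;
    (∀ i ∈ Set.Icc 1 k, N i ⊆ Cl v ∨ N i ∩ Cl v = ∅) ∧
    -- (ii) J(v) = {i ∈ [k] : N_i ⊆ Cl v} is a nonempty subinterval of [k], ≠ [k]:
    ({i | i ∈ Set.Icc 1 k ∧ N i ⊆ Cl v}).Nonempty ∧
    (∀ a b c : ℕ, a ≤ b → b ≤ c →
        a ∈ {i | i ∈ Set.Icc 1 k ∧ N i ⊆ Cl v} →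
        c ∈ {i | i ∈ Set.Icc 1 k ∧ N i ⊆ Cl v} →
        b ∈ {i | i ∈ Set.Icc 1 k ∧ N i ⊆ Cl v}) ∧
    {i | i ∈ Set.Icc 1 k ∧ N i ⊆ Cl v} ≠ Set.Icc 1 k := by
  obtain ⟨hvI, hvN⟩ := hv
  have hnot : ∀ i ∈ Set.Icc 1 k, ¬ Cl v ⊆ N i := by
    intro i hi h
    exact hvN (Set.mem_iUnion₂.2 ⟨i, hi, h⟩)
  have h1 : ∀ i ∈ Set.Icc 1 k, N i ⊆ Cl v ∨ N i ∩ Cl v = ∅ := by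
    intro i hi
    rcases hcompatN v i hi with h | h | h
    · exact absurd h (hnot i hi)
    · exact Or.inl h
    · exact Or.inr (by rw [Set.inter_comm]; exact h)
  have htrans : ∀ x y z, le x y → le y z → le x z := fun x y z => hlin.trans x y z
  have hord : ∀ i, 1 ≤ i → ∀ j, i + 1 ≤ j → j ≤ k → ∀ a ∈ N i, ∀ b ∈ N j, le a b := by
    intro i hi j hij
    induction j, hij using Nat.le_induction with
    | base => exact fun hj a ha b hb => (hNorder i hi (by omega) a ha b hb).1
    | succ j hij ih =>
      intro hj a ha b hb
      obtain ⟨c, hc⟩ := hNne j ⟨by omega, by omega⟩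
      exact htrans a c b (ih (by omega) a ha c hc)
        (hNorder j (by omega) (by omega) c hc b hb).1
  refine ⟨h1, ?_, ?_, ?_⟩
  · obtain ⟨x, hx⟩ := hCl v
    have hxQ : x ∈ Q := hvI.1 hx
    rw [← hNunion] at hxQ
    obtain ⟨i, hi, hxi⟩ := Set.mem_iUnion₂.1 hxQ
    refine ⟨i, hi, ?_⟩
    rcases h1 i hi with h | h
    · exact h
    · exact absurd (show x ∈ N i ∩ Cl v from ⟨hxi, hx⟩) (by rw [h]; simp)
  · rintro a b c hab hbc ⟨ha, haN⟩ ⟨hc, hcN⟩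
    have hb : b ∈ Set.Icc 1 k := ⟨ha.1.trans hab, hbc.trans hc.2⟩
    refine ⟨hb, ?_⟩
    rcases hab.eq_or_lt with rfl | hab
    · exact haN
    rcases hbc.eq_or_lt with rfl | hbc
    · exact hcN
    intro y hy
    obtain ⟨x, hx⟩ := hNne a ha
    obtain ⟨z, hz⟩ := hNne c hc
    exact hClconv v x y z (hord a ha.1 b hab hb.2 x hx y hy)
      (hord b hb.1 c hbc hc.2 y hy z hz) (haN hx) (hcN hz)
  · intro h
    apply hvI.2
    rw [← hNunion]
    refine Set.iUnion₂_subset fun i hi => ?_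
    rw [← h] at hi
    exact hi.2
end

section
/- Let I ∈ rest(Q). Then U(Q) ∪ E(Q) ⊊ C(I) ⊆ U(Q) ∪ E(Q) ∪ I'(Q); in particular C(I) ∩ I'(Q) ≠ ∅. Moreover J(I) := ⋂_{v ∈ C(I) ∩ I'(Q)} J(v) is a nonempty subinterval of [k] with J(I) ≠ [1, k]. -/
open Set

variable {Λ W ι : Type*}

/-- `J(v) = {i ∈ [k] : N_i ⊆ Cl(v)}`. -/
def Jnat (Cl : W → Set Λ) (N : ℕ → Set Λ) (k : ℕ) (v : W) : Set ℕ :=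
  {i | i ∈ Set.Icc 1 k ∧ N i ⊆ Cl v}

/-- `I'(Q) = I(Q) \ ⋃ᵢ V(Nᵢ)`. -/
def IprimeQ (Cl : W → Set Λ) (Q : Set Λ) (N : ℕ → Set Λ) (k : ℕ) : Set W :=
  Iset Cl Q \ ⋃ i ∈ Set.Icc 1 k, Vset Cl (N i)

/-- `rest(Q) = inner(Q) \ ⋃ᵢ (middle_Q(Nᵢ) ∪ inner(Nᵢ))`. -/
def restQ (Cl : W → Set Λ) (CI : ι → Set W) (Q : Set Λ) (N : ℕ → Set Λ) (k : ℕ) : Set ι :=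
  innerSet Cl CI Q \
    ⋃ i ∈ Set.Icc 1 k, (middleSet Cl CI Q (N i) ∪ innerSet Cl CI (N i))

/-- `J(I) = ⋂_{v ∈ C(I) ∩ I'(Q)} J(v)`. -/
def JIset (Cl : W → Set Λ) (CI : ι → Set W) (Q : Set Λ) (N : ℕ → Set Λ) (k : ℕ)
    (I : ι) : Set ℕ :=
  ⋂ v ∈ CI I ∩ IprimeQ Cl Q N k, Jnat Cl N k v

/-- A set of naturals is an interval (order-convex). -/
def IsIntervalIn (s : Set ℕ) : Prop :=
  ∀ a b c : ℕ, a ≤ b → b ≤ c → a ∈ s → c ∈ s → b ∈ s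

/-- `j₁`, the left endpoint of `J(I)`. -/
noncomputable def jLo (Cl : W → Set Λ) (CI : ι → Set W) (Q : Set Λ) (N : ℕ → Set Λ)
    (k : ℕ) (I : ι) : ℕ :=
  sInf (JIset Cl CI Q N k I)

/-- `j₂`, the right endpoint of `J(I)`. -/
noncomputable def jHi (Cl : W → Set Λ) (CI : ι → Set W) (Q : Set Λ) (N : ℕ → Set Λ)
    (k : ℕ) (I : ι) : ℕ :=
  sSup (JIset Cl CI Q N k I)

/-- `I ∈ rest(Q)` with `J(I) = [j₁, j₂]` is discarded if there are
`v, v' ∈ I'(Q) ∖ C(I)` with `{j₁−1, j₁} ⊆ J(v)` and `{j₂, j₂+1} ⊆ J(v')`. -/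
def Discarded (Cl : W → Set Λ) (CI : ι → Set W) (Q : Set Λ) (N : ℕ → Set Λ)
    (k : ℕ) (I : ι) : Prop :=
  (∃ v ∈ IprimeQ Cl Q N k \ CI I,
      jLo Cl CI Q N k I - 1 ∈ Jnat Cl N k v ∧ jLo Cl CI Q N k I ∈ Jnat Cl N k v) ∧
  (∃ v ∈ IprimeQ Cl Q N k \ CI I,
      jHi Cl CI Q N k I ∈ Jnat Cl N k v ∧ jHi Cl CI Q N k I + 1 ∈ Jnat Cl N k v)

/-- `outer(Nᵢ)`: the non-discarded components of `rest(Q)` assigned to `Nᵢ`. -/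
def outerSet (Cl : W → Set Λ) (CI : ι → Set W) (Q : Set Λ) (N : ℕ → Set Λ)
    (k : ℕ) (i : ℕ) : Set ι :=
  {I | I ∈ restQ Cl CI Q N k ∧ ¬ Discarded Cl CI Q N k I ∧
    ((jLo Cl CI Q N k I = jHi Cl CI Q N k I ∧ i = jLo Cl CI Q N k I) ∨
     (jLo Cl CI Q N k I < jHi Cl CI Q N k I ∧ i = jLo Cl CI Q N k I ∧
       ¬ ∃ v ∈ IprimeQ Cl Q N k \ CI I,
           jLo Cl CI Q N k I - 1 ∈ Jnat Cl N k v ∧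
           jLo Cl CI Q N k I ∈ Jnat Cl N k v) ∨
     (jLo Cl CI Q N k I < jHi Cl CI Q N k I ∧ i = jHi Cl CI Q N k I ∧
       ¬ ∃ v ∈ IprimeQ Cl Q N k \ CI I,
           jHi Cl CI Q N k I ∈ Jnat Cl N k v ∧
           jHi Cl CI Q N k I + 1 ∈ Jnat Cl N k v))}

/-- `comp(Nᵢ) = middle_Q(Nᵢ) ∪ inner(Nᵢ) ∪ outer(Nᵢ)`. -/
def compSet (Cl : W → Set Λ) (CI : ι → Set W) (Q : Set Λ) (N : ℕ → Set Λ)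
    (k : ℕ) (i : ℕ) : Set ι :=
  middleSet Cl CI Q (N i) ∪ innerSet Cl CI (N i) ∪ outerSet Cl CI Q N k i

/-- The relation `⊑_Q` on (indices of) children of the Q-node: for `a < b`,
`N_a ⊑_Q N_b` iff some `v ∈ I'(Q)` has `a ∉ J(v)` and `{b, b+1} ⊆ J(v)`; for
`b < a`, `N_a ⊑_Q N_b` iff some `v ∈ I'(Q)` has `{b−1, b} ⊆ J(v)` and `a ∉ J(v)`. -/
def sqQN (Cl : W → Set Λ) (Q : Set Λ) (N : ℕ → Set Λ) (k : ℕ) (a b : ℕ) : Prop :=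
  (a < b ∧ ∃ v ∈ IprimeQ Cl Q N k,
      a ∉ Jnat Cl N k v ∧ b ∈ Jnat Cl N k v ∧ b + 1 ∈ Jnat Cl N k v) ∨
  (b < a ∧ ∃ v ∈ IprimeQ Cl Q N k,
      b - 1 ∈ Jnat Cl N k v ∧ b ∈ Jnat Cl N k v ∧ a ∉ Jnat Cl N k v)

theorem stmt10 [Fintype Λ] [Fintype W] [Fintype ι]
    (Cl : W → Set Λ) (CI : ι → Set W)
    (hCl : ∀ v, (Cl v).Nonempty)
    (hleaf : ∀ ℓ ℓ' : Λ, ℓ ≠ ℓ' → ¬ leafC Cl ℓ ⊆ leafC Cl ℓ')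
    (hCI : ∀ I, (CI I).Nonempty)
    (hHelly : ∀ I, (⋂ v ∈ CI I, Cl v).Nonempty)
    (Q : Set Λ) (hQne : Q.Nonempty)
    (k : ℕ) (hk : 3 ≤ k)
    (N : ℕ → Set Λ)
    (hNne : ∀ i ∈ Set.Icc 1 k, (N i).Nonempty)
    (hNdisj : ∀ i ∈ Set.Icc 1 k, ∀ j ∈ Set.Icc 1 k, i ≠ j → N i ∩ N j = ∅)
    (hNunion : (⋃ i ∈ Set.Icc 1 k, N i) = Q)
    (hcompatQ : ∀ v, Compatible Cl v Q)
    (hcompatN : ∀ v, ∀ i ∈ Set.Icc 1 k, Compatible Cl v (N i))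
    (hJint : ∀ v ∈ IprimeQ Cl Q N k, IsIntervalIn (Jnat Cl N k v))
    (I : ι) (hI : I ∈ restQ Cl CI Q N k) :
    Uset Cl Q ∪ Eset Cl Q ⊂ CI I ∧
    CI I ⊆ Uset Cl Q ∪ Eset Cl Q ∪ IprimeQ Cl Q N k ∧
    (CI I ∩ IprimeQ Cl Q N k).Nonempty ∧
    (JIset Cl CI Q N k I).Nonempty ∧
    IsIntervalIn (JIset Cl CI Q N k I) ∧
    JIset Cl CI Q N k I ⊆ Set.Icc 1 k ∧
    JIset Cl CI Q N k I ≠ Set.Icc 1 k := by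
  obtain ⟨hin, hout⟩ := hI
  have hout' : ∀ i ∈ Set.Icc 1 k, I ∉ middleSet Cl CI Q (N i) ∧ I ∉ innerSet Cl CI (N i) := by
    intro i hi
    constructor
    · intro h
      exact hout (Set.mem_biUnion hi (Or.inl h))
    · intro h
      exact hout (Set.mem_biUnion hi (Or.inr h))
  have hsub : ∀ i ∈ Set.Icc 1 k, N i ⊆ Q := by
    intro i hi x hx
    rw [← hNunion]
    exact Set.mem_biUnion hi hx
  have h1 : (1 : ℕ) ∈ Set.Icc 1 k := ⟨le_refl _, by omega⟩
  have h2 : (2 : ℕ) ∈ Set.Icc 1 k := ⟨by omega, by omega⟩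
  have hns : ¬ ∃ ℓ, Q = {ℓ} := by
    rintro ⟨ℓ, hℓ⟩
    obtain ⟨a, ha⟩ := hNne 1 h1
    obtain ⟨b, hb⟩ := hNne 2 h2
    have ha' := hsub 1 h1 ha
    have hb' := hsub 2 h2 hb
    rw [hℓ, Set.mem_singleton_iff] at ha' hb'
    subst ha'
    subst hb'
    have h := hNdisj 1 h1 2 h2 (by omega)
    exact (Set.eq_empty_iff_forall_notMem.mp h _) ⟨ha, hb⟩
  have hin' := hin
  rcases hin' with ⟨ℓ, hℓ, -⟩ | ⟨-, ⟨v0, hv0, hv0I⟩, hss⟩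
  · exact absurd ⟨ℓ, hℓ⟩ hns
  have hprime : ∀ v ∈ CI I, Cl v ⊂ Q → v ∈ IprimeQ Cl Q N k := by
    intro v hv hvQ
    refine ⟨hvQ, ?_⟩
    intro hmem
    obtain ⟨i, hi, hvi⟩ := Set.mem_iUnion₂.mp hmem
    exact (hout' i hi).1 ⟨hin, (hout' i hi).2, ⟨v, hv, hvi⟩⟩
  have hv0' := hprime v0 hv0 hv0I
  obtain ⟨ℓ, hℓ⟩ := hHelly I
  have hℓ' : ∀ v ∈ CI I, ℓ ∈ Cl v := fun v hv => Set.mem_iInter₂.mp hℓ v hv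
  have hℓQ : ℓ ∈ Q := hv0I.1 (hℓ' v0 hv0)
  have hJsub : JIset Cl CI Q N k I ⊆ Jnat Cl N k v0 :=
    fun i hi => Set.mem_iInter₂.mp hi v0 ⟨hv0, hv0'⟩
  refine ⟨hss, ?_, ⟨v0, hv0, hv0'⟩, ?_, ?_, fun i hi => (hJsub hi).1, ?_⟩
  · intro v hv
    by_cases heq : Cl v = Q
    · exact Or.inl (Or.inl heq)
    rcases hcompatQ v with h | h | h
    · exact Or.inr (hprime v hv (h.ssubset_of_ne heq))
    · exact Or.inl (Or.inr (h.ssubset_of_ne (Ne.symm heq)))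
    · exact absurd ⟨hℓ' v hv, hℓQ⟩ (Set.eq_empty_iff_forall_notMem.mp h ℓ)
  · have hu := hℓQ
    rw [← hNunion] at hu
    obtain ⟨i, hi, hℓi⟩ := Set.mem_iUnion₂.mp hu
    refine ⟨i, Set.mem_iInter₂.mpr ?_⟩
    rintro v ⟨hv, hvp⟩
    refine ⟨hi, ?_⟩
    rcases hcompatN v i hi with h | h | h
    · exact absurd (Set.mem_biUnion hi h) hvp.2
    · exact h
    · exact absurd ⟨hℓ' v hv, hℓi⟩ (Set.eq_empty_iff_forall_notMem.mp h ℓ)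
  · intro a b c hab hbc ha hc
    refine Set.mem_iInter₂.mpr fun v hv => ?_
    exact hJint v hv.2 a b c hab hbc (Set.mem_iInter₂.mp ha v hv) (Set.mem_iInter₂.mp hc v hv)
  · intro heq
    apply hv0I.2
    intro x hx
    rw [← hNunion] at hx
    obtain ⟨i, hi, hxi⟩ := Set.mem_iUnion₂.mp hx
    rw [← heq] at hi
    exact (hJsub hi).2 hxi
end

section
/- Let I ∈ rest(Q) and let J ∈ middle_Q(N_i) ∪ inner(N_i) for some i ∈ [k]. Then C(J) is not a subset of C(I). (Hence, in any order refining inclusion of the sets C(·), a rest-component I and a component J ∈ middle_Q(N_i) ∪ inner(N_i) can only be comparable with I below J.) -/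
open Set

variable {Λ W ι : Type*}

theorem stmt11 [Fintype Λ] [Fintype W] [Fintype ι]
    (Cl : W → Set Λ) (CI : ι → Set W)
    (hCl : ∀ v, (Cl v).Nonempty)
    (hleaf : ∀ ℓ ℓ' : Λ, ℓ ≠ ℓ' → ¬ leafC Cl ℓ ⊆ leafC Cl ℓ')
    (hCI : ∀ I, (CI I).Nonempty)
    (hHelly : ∀ I, (⋂ v ∈ CI I, Cl v).Nonempty)
    (Q : Set Λ) (hQne : Q.Nonempty)
    (k : ℕ) (hk : 3 ≤ k)
    (N : ℕ → Set Λ)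
    (hNne : ∀ i ∈ Set.Icc 1 k, (N i).Nonempty)
    (hNdisj : ∀ i ∈ Set.Icc 1 k, ∀ j ∈ Set.Icc 1 k, i ≠ j → N i ∩ N j = ∅)
    (hNunion : (⋃ i ∈ Set.Icc 1 k, N i) = Q)
    (hcompatQ : ∀ v, Compatible Cl v Q)
    (hcompatN : ∀ v, ∀ i ∈ Set.Icc 1 k, Compatible Cl v (N i))
    (hJint : ∀ v ∈ IprimeQ Cl Q N k, IsIntervalIn (Jnat Cl N k v))
    (I : ι) (hI : I ∈ restQ Cl CI Q N k)
    (i : ℕ) (hi : i ∈ Set.Icc 1 k)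
    (J : ι) (hJ : J ∈ middleSet Cl CI Q (N i) ∪ innerSet Cl CI (N i)) :
    ¬ CI J ⊆ CI I := by
  intro hsub
  obtain ⟨hIQ, hIn⟩ := hI
  have hni : I ∉ middleSet Cl CI Q (N i) ∪ innerSet Cl CI (N i) := fun h =>
    hIn (Set.mem_biUnion hi h)
  have hnV : ¬ (CI I ∩ Vset Cl (N i)).Nonempty := fun h =>
    hni (Or.inl ⟨hIQ, fun h' => hni (Or.inr h'), h⟩)
  rcases hJ with hJ | hJ
  · obtain ⟨_, _, v, hv, hvV⟩ := hJ
    exact hnV ⟨v, hsub hv, hvV⟩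
  · rcases hJ with ⟨l, hNl, hJl⟩ | ⟨_, ⟨v, hv, hvI⟩, _⟩
    · obtain ⟨l', hl'⟩ := hHelly I
      have hIl' : CI I ⊆ leafC Cl l' := fun v hv => Set.mem_iInter₂.mp hl' v hv
      rw [hJl] at hsub
      have heq : l = l' := by
        by_contra hne
        exact hleaf l l' hne (hsub.trans hIl')
      subst heq
      exact hni (Or.inr (Or.inl ⟨l, hNl, Set.Subset.antisymm hIl' hsub⟩))
    · exact hnV ⟨v, hsub hv, hvI.1⟩
end

section
/- (Q-node partition.) The sets comp(N_1), …, comp(N_k) are pairwise disjoint subsets of inner(Q), and every I ∈ inner(Q) that is not discarded belongs to exactly one set comp(N_i). -/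
open Set

variable {Λ W ι : Type*}

theorem stmt12 [Fintype Λ] [Fintype W] [Fintype ι]
    (Cl : W → Set Λ) (CI : ι → Set W)
    (hCl : ∀ v, (Cl v).Nonempty)
    (hleaf : ∀ ℓ ℓ' : Λ, ℓ ≠ ℓ' → ¬ leafC Cl ℓ ⊆ leafC Cl ℓ')
    (hCI : ∀ I, (CI I).Nonempty)
    (hHelly : ∀ I, (⋂ v ∈ CI I, Cl v).Nonempty)
    (Q : Set Λ) (hQne : Q.Nonempty)
    (k : ℕ) (hk : 3 ≤ k)
    (N : ℕ → Set Λ)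
    (hNne : ∀ i ∈ Set.Icc 1 k, (N i).Nonempty)
    (hNdisj : ∀ i ∈ Set.Icc 1 k, ∀ j ∈ Set.Icc 1 k, i ≠ j → N i ∩ N j = ∅)
    (hNunion : (⋃ i ∈ Set.Icc 1 k, N i) = Q)
    (hcompatQ : ∀ v, Compatible Cl v Q)
    (hcompatN : ∀ v, ∀ i ∈ Set.Icc 1 k, Compatible Cl v (N i))
    (hJint : ∀ v ∈ IprimeQ Cl Q N k, IsIntervalIn (Jnat Cl N k v))
    (hQprop : ∀ j₁ j₂ : ℕ, 1 ≤ j₁ → j₁ < j₂ → j₂ ≤ k → (j₁, j₂) ≠ (1, k) →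
      ∃ v ∈ IprimeQ Cl Q N k,
        (j₁ ∉ Jnat Cl N k v ∧ j₂ ∈ Jnat Cl N k v ∧ j₂ + 1 ∈ Jnat Cl N k v) ∨
        (j₁ - 1 ∈ Jnat Cl N k v ∧ j₁ ∈ Jnat Cl N k v ∧ j₂ ∉ Jnat Cl N k v)) :
    (∀ i ∈ Set.Icc 1 k, compSet Cl CI Q N k i ⊆ innerSet Cl CI Q) ∧
    (∀ i ∈ Set.Icc 1 k, ∀ j ∈ Set.Icc 1 k, i ≠ j →
        compSet Cl CI Q N k i ∩ compSet Cl CI Q N k j = ∅) ∧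
    (∀ I ∈ innerSet Cl CI Q,
        ¬ (I ∈ restQ Cl CI Q N k ∧ Discarded Cl CI Q N k I) →
        ∃! i, i ∈ Set.Icc 1 k ∧ I ∈ compSet Cl CI Q N k i) := by
  have hQe : ∀ x, x ∈ Q ↔ ∃ i ∈ Set.Icc 1 k, x ∈ N i := by
    intro x; rw [← hNunion]; simp only [mem_iUnion, exists_prop]
  have hNQ : ∀ i ∈ Set.Icc 1 k, N i ⊆ Q := fun i hi x hx => (hQe x).2 ⟨i, hi, hx⟩
  have hdis : ∀ i ∈ Set.Icc 1 k, ∀ j ∈ Set.Icc 1 k, ∀ x, x ∈ N i → x ∈ N j → i = j := by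
    intro i hi j hj x hx hy
    by_contra h
    have : x ∈ N i ∩ N j := ⟨hx, hy⟩
    rw [hNdisj i hi j hj h] at this
    exact this
  have hother : ∀ i ∈ Set.Icc 1 k, ∃ x ∈ Q, x ∉ N i := by
    intro i hi
    obtain ⟨j, hj, hji⟩ : ∃ j ∈ Set.Icc 1 k, j ≠ i := by
      by_cases h : i = 1
      · exact ⟨2, ⟨by omega, by omega⟩, by omega⟩
      · exact ⟨1, ⟨by omega, by omega⟩, by omega⟩
    obtain ⟨x, hx⟩ := hNne j hj
    exact ⟨x, hNQ j hj hx, fun h => hji (hdis j hj i hi x hx h)⟩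
  have hNss : ∀ i ∈ Set.Icc 1 k, N i ⊂ Q := by
    intro i hi
    obtain ⟨x, hx, hx'⟩ := hother i hi
    exact ⟨hNQ i hi, fun h => hx' (h hx)⟩
  have hQns : ¬ ∃ ℓ, Q = {ℓ} := by
    rintro ⟨ℓ, hℓ⟩
    have h1 : 1 ∈ Set.Icc 1 k := ⟨le_rfl, by omega⟩
    obtain ⟨y, hy⟩ := hNne 1 h1
    obtain ⟨x, hx, hx'⟩ := hother 1 h1
    have e1 := hNQ 1 h1 hy
    rw [hℓ] at hx e1
    rw [mem_singleton_iff] at hx e1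
    subst hx
    subst e1
    exact hx' hy
  have hinner : ∀ i ∈ Set.Icc 1 k, innerSet Cl CI (N i) ⊆ innerSet Cl CI Q := by
    intro i hi I hI
    have key : (CI I ∩ Iset Cl Q).Nonempty ∧ Uset Cl Q ∪ Eset Cl Q ⊆ CI I := by
      rcases hI with ⟨ℓ, hℓ, hC⟩ | ⟨_, ⟨v, hvC, hvI⟩, hss⟩
      · have hℓN : ℓ ∈ N i := by rw [hℓ]; rfl
        have hℓQ := hNQ i hi hℓN
        rw [hC]
        constructor
        · by_contra hne
          obtain ⟨x, hx, hx'⟩ := hother i hi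
          refine hleaf ℓ x (fun h => hx' (h ▸ hℓN)) ?_
          intro v hv
          rcases hcompatQ v with h | h | h
          · by_cases hQv : Q ⊆ Cl v
            · exact hQv hx
            · exact absurd ⟨v, hv, h, hQv⟩ hne
          · exact h hx
          · have : ℓ ∈ Cl v ∩ Q := ⟨hv, hℓQ⟩
            rw [h] at this
            exact this.elim
        · rintro v (hv | hv)
          · have hv' : Cl v = Q := hv
            show ℓ ∈ Cl v
            rw [hv']; exact hℓQ
          · exact hv.1 hℓQ
      · refine ⟨⟨v, hvC, lt_trans (show Cl v < N i from hvI) (hNss i hi)⟩, ?_⟩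
        rintro w (hw | hw)
        · have hw' : Cl w = Q := hw
          refine hss.1 (Or.inr ?_)
          show N i ⊂ Cl w
          rw [hw']; exact hNss i hi
        · exact hss.1 (Or.inr (lt_trans (show N i < Q from hNss i hi) hw))
    obtain ⟨⟨v, hv, hvI⟩, hsub⟩ := key
    refine Or.inr ⟨hQns, ⟨v, hv, hvI⟩, hsub, ?_⟩
    intro h
    have hvI' : Cl v ⊂ Q := hvI
    rcases h hv with h | h
    · have h' : Cl v = Q := h
      rw [h'] at hvI'
      exact hvI'.2 subset_rfl
    · exact hvI'.2 h.1
  have hmi : ∀ i ∈ Set.Icc 1 k, ∀ I, I ∈ middleSet Cl CI Q (N i) ∪ innerSet Cl CI (N i) →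
      (∃ v ∈ CI I, Cl v ⊆ N i) ∨ (∃ ℓ ∈ N i, CI I = leafC Cl ℓ) := by
    intro i hi I hI
    rcases hI with ⟨_, _, v, hv, hvN⟩ | ⟨ℓ, hℓ, hC⟩ | ⟨_, ⟨v, hv, hvI⟩, _⟩
    · exact Or.inl ⟨v, hv, hvN⟩
    · exact Or.inr ⟨ℓ, by rw [hℓ]; rfl, hC⟩
    · exact Or.inl ⟨v, hv, hvI.1⟩
  have hmid : ∀ i ∈ Set.Icc 1 k, ∀ j ∈ Set.Icc 1 k, ∀ I,
      I ∈ middleSet Cl CI Q (N i) ∪ innerSet Cl CI (N i) →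
      I ∈ middleSet Cl CI Q (N j) ∪ innerSet Cl CI (N j) → i = j := by
    intro i hi j hj I h1 h2
    rcases hmi i hi I h1 with ⟨v, hv, hvN⟩ | ⟨ℓ, hℓ, hC⟩ <;>
      rcases hmi j hj I h2 with ⟨w, hw, hwN⟩ | ⟨m, hm, hD⟩
    · obtain ⟨x, hx⟩ := hHelly I
      rw [mem_iInter₂] at hx
      exact hdis i hi j hj x (hvN (hx v hv)) (hwN (hx w hw))
    · rw [hD] at hv
      exact hdis i hi j hj m (hvN hv) hm
    · rw [hC] at hw
      exact hdis i hi j hj ℓ hℓ (hwN hw)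
    · by_cases h : ℓ = m
      · subst h; exact hdis i hi j hj ℓ hℓ hm
      · exact absurd (hC.symm.trans hD).subset (hleaf ℓ m h)
  have hrest : ∀ I ∈ restQ Cl CI Q N k,
      jLo Cl CI Q N k I ∈ JIset Cl CI Q N k I ∧ jHi Cl CI Q N k I ∈ JIset Cl CI Q N k I ∧
      1 ≤ jLo Cl CI Q N k I ∧ jLo Cl CI Q N k I ≤ jHi Cl CI Q N k I ∧ jHi Cl CI Q N k I ≤ k ∧
      (jLo Cl CI Q N k I, jHi Cl CI Q N k I) ≠ (1, k) := by
    intro I hI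
    obtain ⟨hIQ, hnot⟩ := hI
    have hnot' : ∀ i ∈ Set.Icc 1 k, I ∉ middleSet Cl CI Q (N i) ∪ innerSet Cl CI (N i) := by
      intro i hi h
      exact hnot (mem_iUnion₂.2 ⟨i, hi, h⟩)
    obtain ⟨v, hv, hvI⟩ : (CI I ∩ Iset Cl Q).Nonempty := by
      rcases hIQ with ⟨ℓ, hℓ, _⟩ | ⟨_, h, _⟩
      · exact absurd ⟨ℓ, hℓ⟩ hQns
      · exact h
    have hvP : v ∈ IprimeQ Cl Q N k := by
      refine ⟨hvI, fun h => ?_⟩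
      obtain ⟨i, hi, hvi⟩ := mem_iUnion₂.1 h
      by_cases hin : I ∈ innerSet Cl CI (N i)
      · exact hnot' i hi (Or.inr hin)
      · exact hnot' i hi (Or.inl ⟨hIQ, hin, v, hv, hvi⟩)
    have hJv : JIset Cl CI Q N k I ⊆ Jnat Cl N k v := by
      intro x hx
      exact (mem_iInter₂.1 hx) v ⟨hv, hvP⟩
    have hne : (JIset Cl CI Q N k I).Nonempty := by
      obtain ⟨x, hx⟩ := hHelly I
      rw [mem_iInter₂] at hx
      obtain ⟨i, hi, hxi⟩ := (hQe x).1 (hvI.1 (hx v hv))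
      refine ⟨i, mem_iInter₂.2 ?_⟩
      rintro w ⟨hw, hwP⟩
      refine ⟨hi, ?_⟩
      rcases hcompatN w i hi with h | h | h
      · exact absurd (mem_iUnion₂.2 ⟨i, hi, h⟩) hwP.2
      · exact h
      · have : x ∈ Cl w ∩ N i := ⟨hx w hw, hxi⟩
        rw [h] at this
        exact this.elim
    have hbdd : BddAbove (JIset Cl CI Q N k I) := ⟨k, fun x hx => (hJv hx).1.2⟩
    have hlo : jLo Cl CI Q N k I ∈ JIset Cl CI Q N k I := Nat.sInf_mem hne
    have hhi : jHi Cl CI Q N k I ∈ JIset Cl CI Q N k I := Nat.sSup_mem hne hbdd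
    refine ⟨hlo, hhi, (hJv hlo).1.1, Nat.sInf_le hhi, (hJv hhi).1.2, ?_⟩
    intro he
    rw [Prod.mk.injEq] at he
    rw [he.1] at hlo
    rw [he.2] at hhi
    refine hvI.2 ?_
    intro x hx
    obtain ⟨i, hi, hxi⟩ := (hQe x).1 hx
    exact (hJint v hvP 1 i k hi.1 hi.2 (hJv hlo) (hJv hhi)).2 hxi
  have hnb : ∀ I ∈ restQ Cl CI Q N k, jLo Cl CI Q N k I < jHi Cl CI Q N k I →
      (¬ ∃ v ∈ IprimeQ Cl Q N k \ CI I,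
           jLo Cl CI Q N k I - 1 ∈ Jnat Cl N k v ∧ jLo Cl CI Q N k I ∈ Jnat Cl N k v) →
      (¬ ∃ v ∈ IprimeQ Cl Q N k \ CI I,
           jHi Cl CI Q N k I ∈ Jnat Cl N k v ∧ jHi Cl CI Q N k I + 1 ∈ Jnat Cl N k v) →
      False := by
    intro I hI hlt h1 h2
    obtain ⟨hlo, hhi, ha, _, hb, hn⟩ := hrest I hI
    obtain ⟨v, hvP, ⟨hx, hy, hz⟩ | ⟨hx, hy, hz⟩⟩ := hQprop _ _ ha hlt hb hn
    · exact h2 ⟨v, ⟨hvP, fun hv => hx ((mem_iInter₂.1 hlo) v ⟨hv, hvP⟩)⟩, hy, hz⟩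
    · exact h1 ⟨v, ⟨hvP, fun hv => hz ((mem_iInter₂.1 hhi) v ⟨hv, hvP⟩)⟩, hx, hy⟩
  have huniq : ∀ i ∈ Set.Icc 1 k, ∀ j ∈ Set.Icc 1 k, ∀ I,
      I ∈ compSet Cl CI Q N k i → I ∈ compSet Cl CI Q N k j → i = j := by
    intro i hi j hj I h1 h2
    rcases h1 with h1 | h1 <;> rcases h2 with h2 | h2
    · exact hmid i hi j hj I h1 h2
    · exact absurd (mem_iUnion₂.2 ⟨i, hi, h1⟩) h2.1.2
    · exact absurd (mem_iUnion₂.2 ⟨j, hj, h2⟩) h1.1.2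
    · obtain ⟨hR, _, h1⟩ := h1
      obtain ⟨_, _, h2⟩ := h2
      rcases h1 with ⟨e1, r1⟩ | ⟨e1, r1, n1⟩ | ⟨e1, r1, n1⟩ <;>
        rcases h2 with ⟨e2, r2⟩ | ⟨e2, r2, n2⟩ | ⟨e2, r2, n2⟩ <;>
        first
          | omega
          | exact (hnb I hR e1 n1 n2).elim
          | exact (hnb I hR e1 n2 n1).elim
  refine ⟨?_, ?_, ?_⟩
  · rintro i hi I ((h | h) | h)
    · exact h.1
    · exact hinner i hi h
    · exact h.1.1
  · intro i hi j hj hij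
    rw [eq_empty_iff_forall_notMem]
    rintro I ⟨h1, h2⟩
    exact hij (huniq i hi j hj I h1 h2)
  · intro I hI hnd
    have hex : ∃ i, i ∈ Set.Icc 1 k ∧ I ∈ compSet Cl CI Q N k i := by
      by_cases hR : I ∈ restQ Cl CI Q N k
      · have hD : ¬ Discarded Cl CI Q N k I := fun h => hnd ⟨hR, h⟩
        obtain ⟨_, _, ha, hab, hb, _⟩ := hrest I hR
        rcases hab.eq_or_lt with he | hlt
        · exact ⟨_, ⟨ha, hab.trans hb⟩, Or.inr ⟨hR, hD, Or.inl ⟨he, rfl⟩⟩⟩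
        · rcases not_and_or.1 hD with h | h
          · exact ⟨_, ⟨ha, hab.trans hb⟩, Or.inr ⟨hR, hD, Or.inr (Or.inl ⟨hlt, rfl, h⟩)⟩⟩
          · exact ⟨_, ⟨ha.trans hab, hb⟩, Or.inr ⟨hR, hD, Or.inr (Or.inr ⟨hlt, rfl, h⟩)⟩⟩
      · by_contra hno
        refine hR ⟨hI, fun h => ?_⟩
        obtain ⟨i, hi, hh⟩ := mem_iUnion₂.1 h
        exact hno ⟨i, hi, Or.inl hh⟩
    obtain ⟨i, hi, hc⟩ := hex
    exact ⟨i, ⟨hi, hc⟩, fun j hj => huniq j hj.1 i hi I hj.2 hc⟩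
end

section
/- Let i ≠ j in [k], let I_1 ∈ comp(N_i) and I_2 ∈ comp(N_j) with I_1 ≠ I_2 and C(I_1) ⊆ C(I_2). Then N_i ⊑_Q N_j, N_j ⊑_Q N_i does not hold, and I_1 ∈ outer(N_i). -/
open Set

variable {Λ W ι : Type*}

theorem stmt13 [Fintype Λ] [Fintype W] [Fintype ι]
    (Cl : W → Set Λ) (CI : ι → Set W)
    (hCl : ∀ v, (Cl v).Nonempty)
    (hleaf : ∀ ℓ ℓ' : Λ, ℓ ≠ ℓ' → ¬ leafC Cl ℓ ⊆ leafC Cl ℓ')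
    (hCI : ∀ I, (CI I).Nonempty)
    (hHelly : ∀ I, (⋂ v ∈ CI I, Cl v).Nonempty)
    (Q : Set Λ) (hQne : Q.Nonempty)
    (k : ℕ) (hk : 3 ≤ k)
    (N : ℕ → Set Λ)
    (hNne : ∀ i ∈ Set.Icc 1 k, (N i).Nonempty)
    (hNdisj : ∀ i ∈ Set.Icc 1 k, ∀ j ∈ Set.Icc 1 k, i ≠ j → N i ∩ N j = ∅)
    (hNunion : (⋃ i ∈ Set.Icc 1 k, N i) = Q)
    (hcompatQ : ∀ v, Compatible Cl v Q)
    (hcompatN : ∀ v, ∀ i ∈ Set.Icc 1 k, Compatible Cl v (N i))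
    (hJint : ∀ v ∈ IprimeQ Cl Q N k, IsIntervalIn (Jnat Cl N k v))
    (hQprop : ∀ j₁ j₂ : ℕ, 1 ≤ j₁ → j₁ < j₂ → j₂ ≤ k → (j₁, j₂) ≠ (1, k) →
      ∃ v ∈ IprimeQ Cl Q N k,
        (j₁ ∉ Jnat Cl N k v ∧ j₂ ∈ Jnat Cl N k v ∧ j₂ + 1 ∈ Jnat Cl N k v) ∨
        (j₁ - 1 ∈ Jnat Cl N k v ∧ j₁ ∈ Jnat Cl N k v ∧ j₂ ∉ Jnat Cl N k v))
    (i j : ℕ) (hi : i ∈ Set.Icc 1 k) (hj : j ∈ Set.Icc 1 k) (hij : i ≠ j)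
    (I₁ I₂ : ι) (hI₁ : I₁ ∈ compSet Cl CI Q N k i) (hI₂ : I₂ ∈ compSet Cl CI Q N k j)
    (hne : I₁ ≠ I₂) (hsub : CI I₁ ⊆ CI I₂) :
    sqQN Cl Q N k i j ∧ ¬ sqQN Cl Q N k j i ∧ I₁ ∈ outerSet Cl CI Q N k i := by
  classical
  -- an inner vertex meeting N m contains N m
  have hmeet : ∀ v ∈ IprimeQ Cl Q N k, ∀ m ∈ Set.Icc 1 k, ∀ x ∈ N m, x ∈ Cl v →
      m ∈ Jnat Cl N k v := by
    intro v hv m hm x hx hxv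
    refine ⟨hm, ?_⟩
    rcases hcompatN v m hm with h | h | h
    · exact absurd (Set.mem_biUnion hm h) hv.2
    · exact h
    · exact absurd (show x ∈ Cl v ∩ N m from ⟨hxv, hx⟩) (by rw [h]; simp)
  have hdisj : ∀ a ∈ Set.Icc 1 k, ∀ b ∈ Set.Icc 1 k, ∀ x, x ∈ N a → x ∈ N b → a = b := by
    intro a ha b hb x hxa hxb
    by_contra hab
    have : x ∈ N a ∩ N b := ⟨hxa, hxb⟩
    rw [hNdisj a ha b hb hab] at this
    exact this
  have hNQ : ∀ m ∈ Set.Icc 1 k, N m ⊆ Q := by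
    intro m hm x hx
    rw [← hNunion]
    exact Set.mem_biUnion hm hx
  -- common leaf
  have hleafV : ∀ I, ∀ m, (CI I ∩ Vset Cl (N m)).Nonempty →
      ∃ x ∈ N m, ∀ w ∈ CI I, x ∈ Cl w := by
    rintro I m ⟨v, hv, hvm⟩
    obtain ⟨x, hx⟩ := hHelly I
    simp only [Set.mem_iInter] at hx
    exact ⟨x, hvm (hx v hv), hx⟩
  have hleafIn : ∀ I, ∀ m, I ∈ innerSet Cl CI (N m) → ∃ x ∈ N m, ∀ w ∈ CI I, x ∈ Cl w := by
    intro I m hI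
    rcases hI with ⟨l, hl, hC⟩ | ⟨_, ⟨v, hv, hvm⟩, _⟩
    · refine ⟨l, by rw [hl]; rfl, ?_⟩
      intro w hw
      rw [hC] at hw
      exact hw
    · exact hleafV I m ⟨v, hv, hvm.1⟩
  -- components in rest(Q) have no vertex in V(N m)
  have hrestV : ∀ I ∈ restQ Cl CI Q N k, ∀ m ∈ Set.Icc 1 k, ∀ v ∈ CI I, ¬ Cl v ⊆ N m := by
    intro I hI m hm v hv hvm
    apply hI.2
    refine Set.mem_biUnion hm ?_
    by_cases hin : I ∈ innerSet Cl CI (N m)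
    · exact Or.inr hin
    · exact Or.inl ⟨hI.1, hin, ⟨v, hv, hvm⟩⟩
  have hQns : ¬ ∃ l, Q = {l} := by
    rintro ⟨l, hl⟩
    have h1 : (1 : ℕ) ∈ Set.Icc 1 k := ⟨le_refl _, by omega⟩
    have h2 : (2 : ℕ) ∈ Set.Icc 1 k := ⟨by omega, by omega⟩
    obtain ⟨x, hx⟩ := hNne 1 h1
    obtain ⟨y, hy⟩ := hNne 2 h2
    have hx' := hNQ 1 h1 hx
    have hy' := hNQ 2 h2 hy
    rw [hl] at hx' hy'
    have hxy : x = y := by rw [hx', hy']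
    subst hxy
    have := hdisj 1 h1 2 h2 x hx hy
    omega
  have hrest' : ∀ I ∈ restQ Cl CI Q N k, ∃ v ∈ CI I, v ∈ IprimeQ Cl Q N k := by
    intro I hI
    rcases hI.1 with ⟨l, hl, _⟩ | ⟨_, ⟨v, hv, hvQ⟩, _⟩
    · exact absurd ⟨l, hl⟩ hQns
    · refine ⟨v, hv, hvQ, ?_⟩
      intro hmem
      simp only [Set.mem_iUnion] at hmem
      obtain ⟨m, hm, h⟩ := hmem
      exact hrestV I hI m hm v hv h
  have hJne : ∀ I ∈ restQ Cl CI Q N k, (JIset Cl CI Q N k I).Nonempty := by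
    intro I hI
    obtain ⟨v, hv, hv'⟩ := hrest' I hI
    obtain ⟨x, hx⟩ := hHelly I
    simp only [Set.mem_iInter] at hx
    have hxQ : x ∈ Q := hv'.1.1 (hx v hv)
    rw [← hNunion] at hxQ
    simp only [Set.mem_iUnion] at hxQ
    obtain ⟨m, hm, hxm⟩ := hxQ
    refine ⟨m, ?_⟩
    simp only [JIset, Set.mem_iInter]
    intro w hw
    exact hmeet w hw.2 m hm x hxm (hx w hw.1)
  have hJb : ∀ I ∈ restQ Cl CI Q N k, BddAbove (JIset Cl CI Q N k I) := by
    intro I hI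
    obtain ⟨v, hv, hv'⟩ := hrest' I hI
    refine ⟨k, ?_⟩
    intro m hm
    simp only [JIset, Set.mem_iInter] at hm
    exact (hm v ⟨hv, hv'⟩).1.2
  have hout : ∀ I, ∀ m, I ∈ outerSet Cl CI Q N k m → m ∈ JIset Cl CI Q N k I := by
    intro I m hI
    have hlo : jLo Cl CI Q N k I ∈ JIset Cl CI Q N k I := Nat.sInf_mem (hJne I hI.1)
    have hhi : jHi Cl CI Q N k I ∈ JIset Cl CI Q N k I := Nat.sSup_mem (hJne I hI.1) (hJb I hI.1)
    rcases hI.2.2 with ⟨_, h⟩ | ⟨_, h, _⟩ | ⟨_, h, _⟩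
    · rw [h]; exact hlo
    · rw [h]; exact hlo
    · rw [h]; exact hhi
  -- every component of comp(N m) has m in J(I)
  have hcomp : ∀ I, ∀ m ∈ Set.Icc 1 k, I ∈ compSet Cl CI Q N k m → m ∈ JIset Cl CI Q N k I := by
    intro I m hm hI
    have key : (∃ x ∈ N m, ∀ w ∈ CI I, x ∈ Cl w) → m ∈ JIset Cl CI Q N k I := by
      rintro ⟨x, hxm, hx⟩
      simp only [JIset, Set.mem_iInter]
      intro w hw
      exact hmeet w hw.2 m hm x hxm (hx w hw.1)
    rcases hI with (hI | hI) | hI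
    · exact key (hleafV I m hI.2.2)
    · exact key (hleafIn I m hI)
    · exact hout I m hI
  -- no vertex of C(I₁) lies in V(N i)
  have hnoV : ∀ v ∈ CI I₁, ¬ Cl v ⊆ N i := by
    intro v hv hvi
    have key : ¬ (∃ x ∈ N j, ∀ w ∈ CI I₂, x ∈ Cl w) := by
      rintro ⟨x, hxj, hx⟩
      exact hij (hdisj i hi j hj x (hvi (hx v (hsub hv))) hxj)
    rcases hI₂ with (h | h) | h
    · exact key (hleafV I₂ j h.2.2)
    · exact key (hleafIn I₂ j h)
    · exact hrestV I₂ h.1 i hi v (hsub hv) hvi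
  have hI₁o : I₁ ∈ outerSet Cl CI Q N k i := by
    rcases hI₁ with (h | h) | h
    · obtain ⟨v, hv, hvi⟩ := h.2.2
      exact absurd hvi (hnoV v hv)
    · rcases h with ⟨l, hl, hC⟩ | ⟨_, ⟨v, hv, hvi⟩, _⟩
      · exfalso
        have hany : ∀ x, (∀ w ∈ CI I₂, x ∈ Cl w) → x = l := by
          intro x hx
          by_contra hxl
          apply hleaf l x (fun h => hxl h.symm)
          intro w hw
          exact hx w (hsub (by rw [hC]; exact hw))
        have hlj : ¬ l ∈ N j := fun h => hij (hdisj i hi j hj l (by rw [hl]; rfl) h)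
        have key : ¬ (∃ x ∈ N j, ∀ w ∈ CI I₂, x ∈ Cl w) := by
          rintro ⟨x, hxj, hx⟩
          exact hlj (hany x hx ▸ hxj)
        rcases hI₂ with (h | h) | h
        · exact key (hleafV I₂ j h.2.2)
        · exact key (hleafIn I₂ j h)
        · obtain ⟨x, hx⟩ := hHelly I₂
          simp only [Set.mem_iInter] at hx
          have hxl := hany x hx
          subst hxl
          apply h.1.2
          refine Set.mem_biUnion hi (Or.inr (Or.inl ⟨x, hl, ?_⟩))
          apply Set.Subset.antisymm
          · intro w hw
            exact hx w hw
          · rw [← hC]; exact hsub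
      · exact absurd hvi.1 (hnoV v hv)
    · exact h
  have hiJ := hout I₁ i hI₁o
  have hjJ : j ∈ JIset Cl CI Q N k I₁ := by
    have h2 := hcomp I₂ j hj hI₂
    simp only [JIset, Set.mem_iInter] at h2 ⊢
    intro w hw
    exact h2 w ⟨hsub hw.1, hw.2⟩
  have hjv : ∀ v ∈ IprimeQ Cl Q N k, v ∈ CI I₁ → j ∈ Jnat Cl N k v := by
    intro v hv hv1
    simp only [JIset, Set.mem_iInter] at hjJ
    exact hjJ v ⟨hv1, hv⟩
  have hno1k : ¬ ((1 : ℕ) ∈ JIset Cl CI Q N k I₁ ∧ k ∈ JIset Cl CI Q N k I₁) := by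
    rintro ⟨h1, h2⟩
    obtain ⟨v, hv, hv'⟩ := hrest' I₁ hI₁o.1
    simp only [JIset, Set.mem_iInter] at h1 h2
    apply hv'.1.2
    intro x hx
    rw [← hNunion] at hx
    simp only [Set.mem_iUnion] at hx
    obtain ⟨m, hm, hxm⟩ := hx
    exact (hJint v hv' 1 m k hm.1 hm.2 (h1 v ⟨hv, hv'⟩) (h2 v ⟨hv, hv'⟩)).2 hxm
  have hloj : jLo Cl CI Q N k I₁ ≤ j := Nat.sInf_le hjJ
  have hjhi : j ≤ jHi Cl CI Q N k I₁ := le_csSup (hJb I₁ hI₁o.1) hjJ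
  rcases hI₁o.2.2 with ⟨h1, h2⟩ | ⟨_, h2, h3⟩ | ⟨_, h2, h3⟩
  · omega
  · rw [← h2] at h3
    have hlt : i < j := by omega
    have hnot : ¬ sqQN Cl Q N k j i := by
      rintro (⟨h, _⟩ | ⟨_, v, hv, ha, hb, hc⟩)
      · omega
      · by_cases hvI : v ∈ CI I₁
        · exact hc (hjv v hv hvI)
        · exact h3 ⟨v, ⟨hv, hvI⟩, ha, hb⟩
    refine ⟨?_, hnot, hI₁o⟩
    obtain ⟨v, hv, h | h⟩ := hQprop i j hi.1 hlt hj.2 (by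
      intro h
      simp only [Prod.mk.injEq] at h
      exact hno1k ⟨h.1 ▸ hiJ, h.2 ▸ hjJ⟩)
    · exact Or.inl ⟨hlt, v, hv, h⟩
    · exact absurd (Or.inr ⟨hlt, v, hv, h⟩) hnot
  · rw [← h2] at h3
    have hlt : j < i := by omega
    have hnot : ¬ sqQN Cl Q N k j i := by
      rintro (⟨_, v, hv, hc, ha, hb⟩ | ⟨h, _⟩)
      · by_cases hvI : v ∈ CI I₁
        · exact hc (hjv v hv hvI)
        · exact h3 ⟨v, ⟨hv, hvI⟩, ha, hb⟩
      · omega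
    refine ⟨?_, hnot, hI₁o⟩
    obtain ⟨v, hv, h | h⟩ := hQprop j i hj.1 hlt hi.2 (by
      intro h
      simp only [Prod.mk.injEq] at h
      exact hno1k ⟨h.1 ▸ hjJ, h.2 ▸ hiJ⟩)
    · exact absurd (Or.inl ⟨hlt, v, hv, h⟩) hnot
    · exact Or.inr ⟨hlt, v, hv, h⟩
end

section
/- Let i ≠ j in [k] be such that both N_i ⊑_Q N_j and N_j ⊑_Q N_i hold. Then for all I_1 ∈ comp(N_i) and I_2 ∈ comp(N_j), neither C(I_1) ⊆ C(I_2) nor C(I_2) ⊆ C(I_1) holds. -/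
open Set

variable {Λ W ι : Type*}

theorem aux_meet (Cl : W → Set Λ) (CI : ι → Set W)
    (hHelly : ∀ I, (⋂ v ∈ CI I, Cl v).Nonempty) (Q M : Set Λ) (I : ι)
    (h : I ∈ middleSet Cl CI Q M ∪ innerSet Cl CI M) :
    ∀ x ∈ CI I, ∃ p, p ∈ Cl x ∧ p ∈ M := by
  have key : (CI I ∩ Vset Cl M).Nonempty → ∀ x ∈ CI I, ∃ p, p ∈ Cl x ∧ p ∈ M := by
    rintro ⟨u, hu, huM⟩ x hx
    obtain ⟨p, hp⟩ := hHelly I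
    simp only [Set.mem_iInter] at hp
    exact ⟨p, hp x hx, huM (hp u hu)⟩
  rcases h with ⟨_, _, h⟩ | ⟨ℓ, rfl, h⟩ | ⟨_, ⟨u, hu, huM⟩, _⟩
  · exact key h
  · intro x hx
    rw [h] at hx
    exact ⟨ℓ, hx, rfl⟩
  · exact key ⟨u, hu, huM.1⟩

theorem aux_outer_mem (Cl : W → Set Λ) (CI : ι → Set W) (Q : Set Λ) (N : ℕ → Set Λ) (k : ℕ)
    (j : ℕ) (hj : 1 ≤ j) (I : ι) (h : I ∈ outerSet Cl CI Q N k j) :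
    j ∈ JIset Cl CI Q N k I := by
  have h' : j = sInf (JIset Cl CI Q N k I) ∨ j = sSup (JIset Cl CI Q N k I) := by
    rcases h.2.2 with h | h | h
    · exact Or.inl h.2
    · exact Or.inl h.2.1
    · exact Or.inr h.2.1
  by_cases hne : (JIset Cl CI Q N k I).Nonempty
  · rcases h' with h' | h'
    · rw [h']; exact Nat.sInf_mem hne
    · by_cases hb : BddAbove (JIset Cl CI Q N k I)
      · rw [h']; exact Nat.sSup_mem hne hb
      · rw [Nat.sSup_of_not_bddAbove hb] at h'; omega
  · rw [Set.not_nonempty_iff_eq_empty] at hne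
    rw [hne] at h'
    simp at h'
    omega

theorem aux_A (Cl : W → Set Λ) (CI : ι → Set W)
    (hHelly : ∀ I, (⋂ v ∈ CI I, Cl v).Nonempty)
    (Q : Set Λ) (k : ℕ) (N : ℕ → Set Λ)
    (hNdisj : ∀ i ∈ Set.Icc 1 k, ∀ j ∈ Set.Icc 1 k, i ≠ j → N i ∩ N j = ∅)
    (hcompatN : ∀ v, ∀ i ∈ Set.Icc 1 k, Compatible Cl v (N i))
    (j : ℕ) (hj : j ∈ Set.Icc 1 k) (I : ι) (h : I ∈ compSet Cl CI Q N k j) :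
    (∀ x ∈ CI I, x ∈ IprimeQ Cl Q N k → j ∈ Jnat Cl N k x) ∧
    (∀ i ∈ Set.Icc 1 k, i ≠ j → ∀ x ∈ CI I, x ∉ Vset Cl (N i)) := by
  rcases h with h | h
  · have hm := aux_meet Cl CI hHelly Q (N j) I h
    refine ⟨fun x hx hx' => ⟨hj, ?_⟩, fun i hi hij x hx hxV => ?_⟩
    · obtain ⟨p, hp, hpN⟩ := hm x hx
      rcases hcompatN x j hj with hc | hc | hc
      · exact absurd (Set.mem_biUnion hj hc) hx'.2
      · exact hc
      · exact absurd (show p ∈ Cl x ∩ N j from ⟨hp, hpN⟩) (by simp [hc])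
    · obtain ⟨p, hp, hpN⟩ := hm x hx
      exact absurd (show p ∈ N i ∩ N j from ⟨hxV hp, hpN⟩) (by simp [hNdisj i hi j hj hij])
  · refine ⟨fun x hx hx' => ?_, fun i hi hij x hx hxV => ?_⟩
    · have := aux_outer_mem Cl CI Q N k j hj.1 I h
      simp only [JIset, Set.mem_iInter] at this
      exact this x ⟨hx, hx'⟩
    · apply h.1.2
      refine Set.mem_biUnion hi ?_
      by_cases hin : I ∈ innerSet Cl CI (N i)
      · exact Or.inr hin
      · exact Or.inl ⟨h.1.1, hin, x, hx, hxV⟩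

theorem aux_B (Cl : W → Set Λ) (CI : ι → Set W)
    (Q : Set Λ) (k : ℕ) (N : ℕ → Set Λ)
    (i j : ℕ) (hi : i ∈ Set.Icc 1 k) (hij : i ≠ j)
    (hQ : sqQN Cl Q N k j i) (I : ι) (h : I ∈ compSet Cl CI Q N k i) :
    (∃ x ∈ CI I, x ∈ Vset Cl (N i)) ∨
    (∃ x ∈ CI I, x ∈ IprimeQ Cl Q N k ∧ j ∉ Jnat Cl N k x) := by
  rcases h with (⟨_, _, h⟩ | ⟨ℓ, hN, h⟩ | ⟨_, ⟨u, hu, huM⟩, _⟩) | h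
  · exact Or.inl h
  · right
    have : ∃ w ∈ IprimeQ Cl Q N k, i ∈ Jnat Cl N k w ∧ j ∉ Jnat Cl N k w := by
      rcases hQ with ⟨_, w, hw, h1, h2, _⟩ | ⟨_, w, hw, _, h2, h1⟩ <;> exact ⟨w, hw, h2, h1⟩
    obtain ⟨w, hw, h1, h2⟩ := this
    refine ⟨w, ?_, hw, h2⟩
    rw [h]
    exact h1.2 (by rw [hN]; rfl)
  · exact Or.inl ⟨u, hu, huM.1⟩
  · right
    by_contra hcon
    push Not at hcon
    have hjm : j ∈ JIset Cl CI Q N k I := by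
      simp only [JIset, Set.mem_iInter]
      exact fun x hx => hcon x hx.1 hx.2
    have hlo : jLo Cl CI Q N k I ≤ j := Nat.sInf_le hjm
    have hhi : 1 ≤ jHi Cl CI Q N k I → j ≤ jHi Cl CI Q N k I := by
      intro h1
      by_cases hb : BddAbove (JIset Cl CI Q N k I)
      · exact le_csSup hb hjm
      · rw [jHi, Nat.sSup_of_not_bddAbove hb] at h1; omega
    have hi1 : 1 ≤ i := hi.1
    rcases h.2.2 with ⟨h1, h2⟩ | ⟨h1, h2, h3⟩ | ⟨h1, h2, h3⟩
    · have := hhi (by omega)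
      omega
    · rcases hQ with ⟨hlt, _⟩ | ⟨_, w, hw, ha, hb, hc⟩
      · omega
      · by_cases hwC : w ∈ CI I
        · exact hc (hcon w hwC hw)
        · exact h3 ⟨w, ⟨hw, hwC⟩, h2 ▸ ha, h2 ▸ hb⟩
    · have := hhi (by omega)
      rcases hQ with ⟨_, w, hw, hc, ha, hb⟩ | ⟨hlt, _⟩
      · by_cases hwC : w ∈ CI I
        · exact hc (hcon w hwC hw)
        · exact h3 ⟨w, ⟨hw, hwC⟩, h2 ▸ ha, h2 ▸ hb⟩
      · omega

theorem aux_main (Cl : W → Set Λ) (CI : ι → Set W)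
    (hHelly : ∀ I, (⋂ v ∈ CI I, Cl v).Nonempty)
    (Q : Set Λ) (k : ℕ) (N : ℕ → Set Λ)
    (hNdisj : ∀ i ∈ Set.Icc 1 k, ∀ j ∈ Set.Icc 1 k, i ≠ j → N i ∩ N j = ∅)
    (hcompatN : ∀ v, ∀ i ∈ Set.Icc 1 k, Compatible Cl v (N i))
    (i j : ℕ) (hi : i ∈ Set.Icc 1 k) (hj : j ∈ Set.Icc 1 k) (hij : i ≠ j)
    (hQ : sqQN Cl Q N k j i) (I₁ I₂ : ι) (h₁ : I₁ ∈ compSet Cl CI Q N k i)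
    (h₂ : I₂ ∈ compSet Cl CI Q N k j) : ¬ CI I₁ ⊆ CI I₂ := by
  intro hsub
  obtain ⟨ha, hb⟩ := aux_A Cl CI hHelly Q k N hNdisj hcompatN j hj I₂ h₂
  rcases aux_B Cl CI Q k N i j hi hij hQ I₁ h₁ with ⟨x, hx, hV⟩ | ⟨x, hx, hx', hJ⟩
  · exact hb i hi hij x (hsub hx) hV
  · exact hJ (ha x (hsub hx) hx')

theorem stmt14 [Fintype Λ] [Fintype W] [Fintype ι]
    (Cl : W → Set Λ) (CI : ι → Set W)
    (hCl : ∀ v, (Cl v).Nonempty)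
    (hleaf : ∀ ℓ ℓ' : Λ, ℓ ≠ ℓ' → ¬ leafC Cl ℓ ⊆ leafC Cl ℓ')
    (hCI : ∀ I, (CI I).Nonempty)
    (hHelly : ∀ I, (⋂ v ∈ CI I, Cl v).Nonempty)
    (Q : Set Λ) (hQne : Q.Nonempty)
    (k : ℕ) (hk : 3 ≤ k)
    (N : ℕ → Set Λ)
    (hNne : ∀ i ∈ Set.Icc 1 k, (N i).Nonempty)
    (hNdisj : ∀ i ∈ Set.Icc 1 k, ∀ j ∈ Set.Icc 1 k, i ≠ j → N i ∩ N j = ∅)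
    (hNunion : (⋃ i ∈ Set.Icc 1 k, N i) = Q)
    (hcompatQ : ∀ v, Compatible Cl v Q)
    (hcompatN : ∀ v, ∀ i ∈ Set.Icc 1 k, Compatible Cl v (N i))
    (hJint : ∀ v ∈ IprimeQ Cl Q N k, IsIntervalIn (Jnat Cl N k v))
    (hQprop : ∀ j₁ j₂ : ℕ, 1 ≤ j₁ → j₁ < j₂ → j₂ ≤ k → (j₁, j₂) ≠ (1, k) →
      ∃ v ∈ IprimeQ Cl Q N k,
        (j₁ ∉ Jnat Cl N k v ∧ j₂ ∈ Jnat Cl N k v ∧ j₂ + 1 ∈ Jnat Cl N k v) ∨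
        (j₁ - 1 ∈ Jnat Cl N k v ∧ j₁ ∈ Jnat Cl N k v ∧ j₂ ∉ Jnat Cl N k v))
    (i j : ℕ) (hi : i ∈ Set.Icc 1 k) (hj : j ∈ Set.Icc 1 k) (hij : i ≠ j)
    (hQij : sqQN Cl Q N k i j) (hQji : sqQN Cl Q N k j i) :
    ∀ I₁ ∈ compSet Cl CI Q N k i, ∀ I₂ ∈ compSet Cl CI Q N k j,
      ¬ CI I₁ ⊆ CI I₂ ∧ ¬ CI I₂ ⊆ CI I₁ := by
  intro I₁ h₁ I₂ h₂
  exact ⟨aux_main Cl CI hHelly Q k N hNdisj hcompatN i j hi hj hij hQji I₁ I₂ h₁ h₂,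
    aux_main Cl CI hHelly Q k N hNdisj hcompatN j i hj hi hij.symm hQij I₂ I₁ h₂ h₁⟩
end

section
/- (Zigzag property of chains at a Q-node.) Let I_1 ∈ comp(N_{i_1}), I_2 ∈ comp(N_{i_2}), I_3 ∈ comp(N_{i_3}) with i_1 ≠ i_2, I_1 ≠ I_2, I_2 ≠ I_3, C(I_1) ⊆ C(I_2) and C(I_2) ⊆ C(I_3). Then: if i_1 < i_2 then i_1 < i_3, and if i_1 > i_2 then i_1 > i_3. -/
open Set

variable {Λ W ι : Type*}

/-- `I` meets `V(N_i)`, or is the component of the leaf clique of a singleton `N_i`. -/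
def NearX (Cl : W → Set Λ) (CI : ι → Set W) (M : Set Λ) (I : ι) : Prop :=
  (∃ v ∈ CI I, Cl v ⊆ M) ∨ (∃ ℓ, M = {ℓ} ∧ CI I = leafC Cl ℓ)

theorem near_of_inner {Cl : W → Set Λ} {CI : ι → Set W} {M : Set Λ} {I : ι}
    (h : I ∈ innerSet Cl CI M) : NearX Cl CI M I := by
  rcases h with h | ⟨_, ⟨v, hv, hv'⟩, _⟩
  · exact Or.inr h
  · exact Or.inl ⟨v, hv, hv'.1⟩

theorem near_or_outer {Cl : W → Set Λ} {CI : ι → Set W} {Q : Set Λ} {N : ℕ → Set Λ}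
    {k i : ℕ} {I : ι} (h : I ∈ compSet Cl CI Q N k i) :
    NearX Cl CI (N i) I ∨ I ∈ outerSet Cl CI Q N k i := by
  rcases h with (⟨_, _, v, hv, hv'⟩ | h) | h
  · exact Or.inl (Or.inl ⟨v, hv, hv'⟩)
  · exact Or.inl (near_of_inner h)
  · exact Or.inr h

theorem rest_not_near {Cl : W → Set Λ} {CI : ι → Set W} {Q : Set Λ} {N : ℕ → Set Λ}
    {k i : ℕ} {I : ι} (h : I ∈ restQ Cl CI Q N k) (hi : i ∈ Set.Icc 1 k) :
    ¬ NearX Cl CI (N i) I := by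
  intro hn
  have hin : I ∉ innerSet Cl CI (N i) := fun h' =>
    h.2 (Set.mem_biUnion hi (Or.inr h'))
  rcases hn with ⟨v, hv, hv'⟩ | hn
  · exact h.2 (Set.mem_biUnion hi (Or.inl ⟨h.1, hin, v, hv, hv'⟩))
  · exact hin (Or.inl hn)

theorem near_helly {Cl : W → Set Λ} {CI : ι → Set W} {M : Set Λ} {I : ι} {x : Λ}
    (hleaf : ∀ ℓ ℓ' : Λ, ℓ ≠ ℓ' → ¬ leafC Cl ℓ ⊆ leafC Cl ℓ')
    (h : NearX Cl CI M I) (hx : ∀ v ∈ CI I, x ∈ Cl v) : x ∈ M := by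
  rcases h with ⟨v, hv, hv'⟩ | ⟨ℓ, rfl, h⟩
  · exact hv' (hx v hv)
  · by_contra hne
    exact hleaf ℓ x (fun e => hne (by simp [e])) (fun v hv => hx v (h ▸ hv))

theorem near_mono {Cl : W → Set Λ} {CI : ι → Set W} {M : Set Λ} {I I' : ι} {x : Λ}
    (hleaf : ∀ ℓ ℓ' : Λ, ℓ ≠ ℓ' → ¬ leafC Cl ℓ ⊆ leafC Cl ℓ')
    (h : NearX Cl CI M I) (hs : CI I ⊆ CI I') (hx : ∀ v ∈ CI I', x ∈ Cl v) :
    NearX Cl CI M I' := by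
  have hxM := near_helly hleaf h (fun v hv => hx v (hs hv))
  rcases h with ⟨v, hv, hv'⟩ | ⟨ℓ, rfl, h⟩
  · exact Or.inl ⟨v, hs hv, hv'⟩
  · obtain rfl : x = ℓ := hxM
    exact Or.inr ⟨x, rfl, Set.Subset.antisymm (fun v hv => hx v hv) (h ▸ hs)⟩

theorem mem_JI_of_helly {Cl : W → Set Λ} {CI : ι → Set W} {Q : Set Λ} {N : ℕ → Set Λ}
    {k i : ℕ} {I : ι} {x : Λ}
    (hcompatN : ∀ v, ∀ i ∈ Set.Icc 1 k, Compatible Cl v (N i))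
    (hx : ∀ v ∈ CI I, x ∈ Cl v) (hi : i ∈ Set.Icc 1 k) (hxi : x ∈ N i) :
    i ∈ JIset Cl CI Q N k I := by
  refine Set.mem_iInter₂.2 fun u hu => ⟨hi, ?_⟩
  rcases hcompatN u i hi with h | h | h
  · exact absurd (Set.mem_biUnion hi h) hu.2.2
  · exact h
  · exact absurd (show x ∈ Cl u ∩ N i from ⟨hx u hu.1, hxi⟩) (by simp [h])

theorem JI_mem {Cl : W → Set Λ} {CI : ι → Set W} {Q : Set Λ} {N : ℕ → Set Λ}
    {k i : ℕ} {I : ι} (h : i ∈ JIset Cl CI Q N k I) {v : W} (hv : v ∈ CI I)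
    (hv' : v ∈ IprimeQ Cl Q N k) : i ∈ Jnat Cl N k v :=
  Set.mem_iInter₂.1 h v ⟨hv, hv'⟩

theorem rest_meets {Cl : W → Set Λ} {CI : ι → Set W} {Q : Set Λ} {N : ℕ → Set Λ}
    {k : ℕ} {I : ι} (hk : 3 ≤ k)
    (hNne : ∀ i ∈ Set.Icc 1 k, (N i).Nonempty)
    (hNdisj : ∀ i ∈ Set.Icc 1 k, ∀ j ∈ Set.Icc 1 k, i ≠ j → N i ∩ N j = ∅)
    (hNunion : (⋃ i ∈ Set.Icc 1 k, N i) = Q)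
    (h : I ∈ restQ Cl CI Q N k) : ∃ v ∈ CI I, v ∈ IprimeQ Cl Q N k := by
  rcases h.1 with ⟨ℓ, hQ, _⟩ | ⟨_, ⟨v, hv, hv'⟩, _⟩
  · exfalso
    have h1 : (1 : ℕ) ∈ Set.Icc 1 k := ⟨le_rfl, by omega⟩
    have h2 : (2 : ℕ) ∈ Set.Icc 1 k := ⟨by omega, by omega⟩
    obtain ⟨x, hx⟩ := hNne 1 h1
    obtain ⟨y, hy⟩ := hNne 2 h2
    have hxQ : x ∈ Q := hNunion ▸ Set.mem_biUnion h1 hx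
    have hyQ : y ∈ Q := hNunion ▸ Set.mem_biUnion h2 hy
    rw [hQ] at hxQ hyQ
    obtain rfl : x = ℓ := hxQ
    obtain rfl : y = x := hyQ
    have := hNdisj 1 h1 2 h2 (by omega)
    exact absurd (show y ∈ N 1 ∩ N 2 from ⟨hx, hy⟩) (by simp [this])
  · refine ⟨v, hv, hv', fun hm => ?_⟩
    obtain ⟨i, hi, hvi⟩ := Set.mem_iUnion₂.1 hm
    exact rest_not_near h hi (Or.inl ⟨v, hv, hvi⟩)

/-- Endpoint facts for a component of `rest(Q)`. -/
theorem rest_ends {Cl : W → Set Λ} {CI : ι → Set W} {Q : Set Λ} {N : ℕ → Set Λ}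
    {k : ℕ} {I : ι} (hk : 3 ≤ k)
    (hHelly : ∀ I, (⋂ v ∈ CI I, Cl v).Nonempty)
    (hNne : ∀ i ∈ Set.Icc 1 k, (N i).Nonempty)
    (hNdisj : ∀ i ∈ Set.Icc 1 k, ∀ j ∈ Set.Icc 1 k, i ≠ j → N i ∩ N j = ∅)
    (hNunion : (⋃ i ∈ Set.Icc 1 k, N i) = Q)
    (hcompatN : ∀ v, ∀ i ∈ Set.Icc 1 k, Compatible Cl v (N i))
    (h : I ∈ restQ Cl CI Q N k) :
    jLo Cl CI Q N k I ∈ JIset Cl CI Q N k I ∧ jHi Cl CI Q N k I ∈ JIset Cl CI Q N k I ∧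
    ∀ q ∈ JIset Cl CI Q N k I, jLo Cl CI Q N k I ≤ q ∧ q ≤ jHi Cl CI Q N k I := by
  obtain ⟨v, hv, hv'⟩ := rest_meets hk hNne hNdisj hNunion h
  obtain ⟨x, hx⟩ := hHelly I
  have hx' : ∀ v ∈ CI I, x ∈ Cl v := fun v hv => Set.mem_iInter₂.1 hx v hv
  have hxQ : x ∈ Q := hv'.1.1 (hx' v hv)
  rw [← hNunion] at hxQ
  obtain ⟨j, hj, hxj⟩ := Set.mem_iUnion₂.1 hxQ
  have hne : (JIset Cl CI Q N k I).Nonempty := ⟨j, mem_JI_of_helly hcompatN hx' hj hxj⟩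
  have hbdd : BddAbove (JIset Cl CI Q N k I) := ⟨k, fun q hq => (JI_mem hq hv hv').1.2⟩
  exact ⟨Nat.sInf_mem hne, Nat.sSup_mem hne hbdd,
    fun q hq => ⟨Nat.sInf_le hq, le_csSup hbdd hq⟩⟩

theorem stmt15 [Fintype Λ] [Fintype W] [Fintype ι]
    (Cl : W → Set Λ) (CI : ι → Set W)
    (hCl : ∀ v, (Cl v).Nonempty)
    (hleaf : ∀ ℓ ℓ' : Λ, ℓ ≠ ℓ' → ¬ leafC Cl ℓ ⊆ leafC Cl ℓ')
    (hCI : ∀ I, (CI I).Nonempty)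
    (hHelly : ∀ I, (⋂ v ∈ CI I, Cl v).Nonempty)
    (Q : Set Λ) (hQne : Q.Nonempty)
    (k : ℕ) (hk : 3 ≤ k)
    (N : ℕ → Set Λ)
    (hNne : ∀ i ∈ Set.Icc 1 k, (N i).Nonempty)
    (hNdisj : ∀ i ∈ Set.Icc 1 k, ∀ j ∈ Set.Icc 1 k, i ≠ j → N i ∩ N j = ∅)
    (hNunion : (⋃ i ∈ Set.Icc 1 k, N i) = Q)
    (hcompatQ : ∀ v, Compatible Cl v Q)
    (hcompatN : ∀ v, ∀ i ∈ Set.Icc 1 k, Compatible Cl v (N i))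
    (hJint : ∀ v ∈ IprimeQ Cl Q N k, IsIntervalIn (Jnat Cl N k v))
    (hQprop : ∀ j₁ j₂ : ℕ, 1 ≤ j₁ → j₁ < j₂ → j₂ ≤ k → (j₁, j₂) ≠ (1, k) →
      ∃ v ∈ IprimeQ Cl Q N k,
        (j₁ ∉ Jnat Cl N k v ∧ j₂ ∈ Jnat Cl N k v ∧ j₂ + 1 ∈ Jnat Cl N k v) ∨
        (j₁ - 1 ∈ Jnat Cl N k v ∧ j₁ ∈ Jnat Cl N k v ∧ j₂ ∉ Jnat Cl N k v))
    (i₁ i₂ i₃ : ℕ) (hi₁ : i₁ ∈ Set.Icc 1 k) (hi₂ : i₂ ∈ Set.Icc 1 k)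
    (hi₃ : i₃ ∈ Set.Icc 1 k) (h₁₂ : i₁ ≠ i₂)
    (I₁ I₂ I₃ : ι)
    (hI₁ : I₁ ∈ compSet Cl CI Q N k i₁)
    (hI₂ : I₂ ∈ compSet Cl CI Q N k i₂)
    (hI₃ : I₃ ∈ compSet Cl CI Q N k i₃)
    (hne₁₂ : I₁ ≠ I₂) (hne₂₃ : I₂ ≠ I₃)
    (hsub₁₂ : CI I₁ ⊆ CI I₂) (hsub₂₃ : CI I₂ ⊆ CI I₃) :
    (i₁ < i₂ → i₁ < i₃) ∧ (i₂ < i₁ → i₃ < i₁) := by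
  have hx : ∀ I, ∃ x, ∀ v ∈ CI I, x ∈ Cl v := by
    intro I
    obtain ⟨x, hx⟩ := hHelly I
    exact ⟨x, fun v hv => Set.mem_iInter₂.1 hx v hv⟩
  have hends := fun (I : ι) (h : I ∈ restQ Cl CI Q N k) =>
    rest_ends hk hHelly hNne hNdisj hNunion hcompatN h
  have hpair : ∀ I I' i i', i ∈ Set.Icc 1 k → i' ∈ Set.Icc 1 k → i ≠ i' →
      I ∈ compSet Cl CI Q N k i → I' ∈ compSet Cl CI Q N k i' → CI I ⊆ CI I' →
      I ∈ outerSet Cl CI Q N k i := by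
    intro I I' i i' hi hi' hii h h' hs
    rcases near_or_outer h with hn | ho
    · exfalso
      obtain ⟨x, hx⟩ := hx I'
      have hn' := near_mono hleaf hn hs hx
      rcases near_or_outer h' with hm | ho'
      · have h1 := near_helly hleaf hn' hx
        have h2 := near_helly hleaf hm hx
        have h3 := hNdisj i hi i' hi' hii
        exact absurd (show x ∈ N i ∩ N i' from ⟨h1, h2⟩) (by simp [h3])
      · exact rest_not_near ho'.1 hi hn'
    · exact ho
  have hmemJ : ∀ I i, i ∈ Set.Icc 1 k → I ∈ compSet Cl CI Q N k i →
      i ∈ JIset Cl CI Q N k I := by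
    intro I i hi h
    rcases near_or_outer h with hn | ho
    · obtain ⟨x, hx⟩ := hx I
      exact mem_JI_of_helly hcompatN hx hi (near_helly hleaf hn hx)
    · obtain ⟨h1, h2, _⟩ := hends I ho.1
      rcases ho.2.2 with ⟨_, rfl⟩ | ⟨_, rfl, _⟩ | ⟨_, rfl, _⟩ <;> assumption
  have hmono : ∀ I I', CI I ⊆ CI I' → JIset Cl CI Q N k I' ⊆ JIset Cl CI Q N k I := by
    intro I I' hs q hq
    exact Set.mem_iInter₂.2 fun v hv => JI_mem hq (hs hv.1) hv.2
  have hout : ∀ I i p, I ∈ outerSet Cl CI Q N k i → p ∈ JIset Cl CI Q N k I → p ≠ i →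
      (i < p ∧ (∀ q ∈ JIset Cl CI Q N k I, i ≤ q) ∧
        ∀ v ∈ IprimeQ Cl Q N k, i - 1 ∈ Jnat Cl N k v → i ∈ Jnat Cl N k v → v ∈ CI I) ∨
      (p < i ∧ (∀ q ∈ JIset Cl CI Q N k I, q ≤ i) ∧
        ∀ v ∈ IprimeQ Cl Q N k, i ∈ Jnat Cl N k v → i + 1 ∈ Jnat Cl N k v → v ∈ CI I) := by
    intro I i p ho hp hpi
    obtain ⟨_, _, h3⟩ := hends I ho.1
    have hp3 := h3 p hp
    rcases ho.2.2 with ⟨he, rfl⟩ | ⟨_, rfl, hno⟩ | ⟨_, rfl, hno⟩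
    · omega
    · refine Or.inl ⟨by omega, fun q hq => (h3 q hq).1, fun v hv ha hb => ?_⟩
      by_contra hc
      exact hno ⟨v, ⟨hv, hc⟩, ha, hb⟩
    · refine Or.inr ⟨by omega, fun q hq => (h3 q hq).2, fun v hv ha hb => ?_⟩
      by_contra hc
      exact hno ⟨v, ⟨hv, hc⟩, ha, hb⟩
  have hfull : ∀ I, I ∈ restQ Cl CI Q N k → 1 ∈ JIset Cl CI Q N k I →
      k ∈ JIset Cl CI Q N k I → False := by
    intro I hI h1 hk'
    obtain ⟨v, hv, hv'⟩ := rest_meets hk hNne hNdisj hNunion hI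
    apply hv'.1.2
    rw [← hNunion]
    refine Set.iUnion₂_subset fun j hj => ?_
    exact (hJint v hv' 1 j k hj.1 hj.2 (JI_mem h1 hv hv') (JI_mem hk' hv hv')).2
  have ho₁ := hpair I₁ I₂ i₁ i₂ hi₁ hi₂ h₁₂ hI₁ hI₂ hsub₁₂
  have hJ2 := hmemJ I₂ i₂ hi₂ hI₂
  have hJ3 := hmono _ _ hsub₂₃ (hmemJ I₃ i₃ hi₃ hI₃)
  have hJ21 := hmono _ _ hsub₁₂ hJ2
  have hJ31 := hmono _ _ hsub₁₂ hJ3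
  have hne : i₁ ≠ i₃ := by
    rintro rfl
    have ho₂ := hpair I₂ I₃ i₂ i₁ hi₂ hi₁ h₁₂.symm hI₂ hI₃ hsub₂₃
    rcases hout I₁ i₁ i₂ ho₁ hJ21 h₁₂.symm with ⟨hlt, _, hA⟩ | ⟨hlt, _, hA⟩ <;>
    rcases hout I₂ i₂ i₁ ho₂ hJ3 h₁₂ with ⟨hlt', _, hB⟩ | ⟨hlt', _, hB⟩
    · omega
    · obtain ⟨v, hv, ⟨h1, h2, h3⟩ | ⟨h1, h2, h3⟩⟩ := hQprop i₁ i₂ hi₁.1 hlt hi₂.2 (by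
        intro he
        obtain ⟨rfl, rfl⟩ := Prod.mk.inj he
        exact hfull I₂ ho₂.1 hJ3 hJ2)
      · exact h1 (JI_mem hJ3 (hB v hv h2 h3) hv)
      · exact h3 (JI_mem hJ2 (hsub₁₂ (hA v hv h1 h2)) hv)
    · obtain ⟨v, hv, ⟨h1, h2, h3⟩ | ⟨h1, h2, h3⟩⟩ := hQprop i₂ i₁ hi₂.1 hlt hi₁.2 (by
        intro he
        obtain ⟨rfl, rfl⟩ := Prod.mk.inj he
        exact hfull I₂ ho₂.1 hJ2 hJ3)
      · exact h1 (JI_mem hJ2 (hsub₁₂ (hA v hv h2 h3)) hv)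
      · exact h3 (JI_mem hJ3 (hB v hv h1 h2) hv)
    · omega
  rcases hout I₁ i₁ i₂ ho₁ hJ21 h₁₂.symm with ⟨hlt, hA, _⟩ | ⟨hlt, hA, _⟩ <;>
  · have := hA i₃ hJ31
    constructor <;> intro _ <;> omega
end
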